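/- arXiv:2402.07061 — 3 statements merged into one kernel-verified Lean document; each statement's English description precedes it below -/
import Mathlib

section
/- For every integer k ≥ 9, TSP/k-Opt has the all-exp property: there are infinitely many pairs of a TSP instance and an initial tour such that every maximal improving k-swap sequence starting from the initial tour has length exponential in the number of vertices of the instance; equivalently, the k-Opt algorithm started from this tour needs an exponential number of iterations under every pivot rule. -/
/-!
Statement 2: For every integer k ≥ 9, TSP/k-Opt has the all-exp property.

A TSP instance on `Fin n` is given by a nonnegative weight function on `Sym2 (Fin n)`
(the underlying graph being complete). A tour is a Hamiltonian cycle, modelled as a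
permutation which is a single cycle through all vertices.
-/

open Finset

variable {V : Type*} [Fintype V] [DecidableEq V]

/-- A tour: a permutation of the vertices forming one cycle through all of them. -/
def IsTour (σ : Equiv.Perm V) : Prop :=
  σ.IsCycle ∧ σ.support = Finset.univ

/-- The set of edges used by a tour. -/
def tourEdges (σ : Equiv.Perm V) : Finset (Sym2 V) :=
  Finset.univ.image fun v => s(v, σ v)

/-- The total weight of a tour. -/
def tourWeight (w : Sym2 V → ℝ) (σ : Equiv.Perm V) : ℝ :=
  ∑ e ∈ tourEdges σ, w e

/-- A `k`-swap: replace at most `k` edges of the tour (with equally many new edges)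
so that again a tour results. -/
def IsKSwap (k : ℕ) (σ σ' : Equiv.Perm V) : Prop :=
  IsTour σ' ∧ (tourEdges σ \ tourEdges σ').card ≤ k

/-- An improving `k`-swap strictly decreases the total tour weight. -/
def ImprovingKSwap (w : Sym2 V → ℝ) (k : ℕ) (σ σ' : Equiv.Perm V) : Prop :=
  IsKSwap k σ σ' ∧ tourWeight w σ' < tourWeight w σ

/-- A k-Opt locally optimal tour: no improving `k`-swap exists. -/
def IsLocalOpt (w : Sym2 V → ℝ) (k : ℕ) (σ : Equiv.Perm V) : Prop :=
  ∀ σ', ¬ ImprovingKSwap w k σ σ'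

/-- Improving `k`-swap sequences starting from a given tour. -/
def ImprovingSwapSeq (w : Sym2 V → ℝ) (k : ℕ) : Equiv.Perm V → List (Equiv.Perm V) → Prop
  | _, [] => True
  | σ, τ :: l => ImprovingKSwap w k σ τ ∧ ImprovingSwapSeq w k τ l

/-- A maximal improving `k`-swap sequence: an improving sequence ending at a
k-Opt locally optimal tour. -/
def MaximalImprovingSwapSeq (w : Sym2 V → ℝ) (k : ℕ) (σ₀ : Equiv.Perm V)
    (l : List (Equiv.Perm V)) : Prop :=
  ImprovingSwapSeq w k σ₀ l ∧ IsLocalOpt w k ((σ₀ :: l).getLast (List.cons_ne_nil _ _))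

/-- The all-exp property for TSP/k-Opt: there is a constant `c > 1` such that for
infinitely many sizes `n` there are a TSP instance on `n` vertices and an initial tour
from which every maximal improving `k`-swap sequence has length at least `c ^ n`,
i.e. the k-Opt algorithm needs exponentially many iterations under every pivot rule. -/
def TSPKOptAllExp (k : ℕ) : Prop :=
  ∃ c : ℝ, 1 < c ∧
    ∀ N : ℕ, ∃ n : ℕ, N ≤ n ∧
      ∃ (w : Sym2 (Fin n) → ℝ) (τ₀ : Equiv.Perm (Fin n)),
        (∀ e, 0 ≤ w e) ∧ IsTour τ₀ ∧
        ∀ l : List (Equiv.Perm (Fin n)),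
          MaximalImprovingSwapSeq w k τ₀ l → c ^ n ≤ (l.length : ℝ)


/-! ### Generic facts about tours -/

theorem IsTour.apply_ne {σ : Equiv.Perm V} (h : IsTour σ) (v : V) : σ v ≠ v := by
  have : v ∈ σ.support := by rw [h.2]; exact Finset.mem_univ v
  exact Equiv.Perm.mem_support.1 this

theorem IsTour.reach {σ : Equiv.Perm V} (h : IsTour σ) (u v : V) : ∃ m : ℕ, (σ ^ m) u = v :=
  h.1.exists_pow_eq (h.apply_ne u) (h.apply_ne v)

theorem isTour_of_reach {σ : Equiv.Perm V} (u : V) (hu : ∀ v, σ v ≠ v)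
    (h : ∀ v, σ.SameCycle u v) : IsTour σ := by
  refine ⟨⟨u, hu u, fun v _ => h v⟩, ?_⟩
  ext v
  simp [hu v]

theorem IsTour.inv {σ : Equiv.Perm V} (h : IsTour σ) : IsTour σ⁻¹ :=
  ⟨h.1.inv, by rw [Equiv.Perm.support_inv, h.2]⟩

theorem IsTour.sq_ne {σ : Equiv.Perm V} (h : IsTour σ) (hc : 3 ≤ Fintype.card V) (v : V) :
    σ (σ v) ≠ v := by
  intro hv
  have key : ∀ m : ℕ, (σ ^ m) v = v ∨ (σ ^ m) v = σ v := by
    intro m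
    induction m with
    | zero => left; simp
    | succ m ih =>
      rw [pow_succ', Equiv.Perm.mul_apply]
      rcases ih with ih | ih <;> rw [ih]
      · right; rfl
      · left; exact hv
  have : (Finset.univ : Finset V) ⊆ {v, σ v} := by
    intro u _
    obtain ⟨m, hm⟩ := h.reach v u
    have := key m
    rw [hm] at this
    simpa using this
  have h1 := Finset.card_le_card this
  have h2 : ({v, σ v} : Finset V).card ≤ 2 := Finset.card_le_two
  rw [Finset.card_univ] at h1
  omega

theorem tourEdges_inv (σ : Equiv.Perm V) : tourEdges σ⁻¹ = tourEdges σ := by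
  ext e
  simp only [tourEdges, Finset.mem_image, Finset.mem_univ, true_and]
  constructor
  · rintro ⟨v, rfl⟩
    exact ⟨σ⁻¹ v, by simp [Sym2.eq_swap]⟩
  · rintro ⟨v, rfl⟩
    exact ⟨σ v, by simp [Sym2.eq_swap]⟩

theorem mem_tourEdges {σ : Equiv.Perm V} {u v : V} :
    s(u, v) ∈ tourEdges σ ↔ σ u = v ∨ σ v = u := by
  simp only [tourEdges, Finset.mem_image, Finset.mem_univ, true_and, Sym2.eq_iff]
  constructor
  · rintro ⟨x, ⟨rfl, h⟩ | ⟨rfl, h⟩⟩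
    · exact Or.inl h
    · exact Or.inr h
  · rintro (h | h)
    · exact ⟨u, Or.inl ⟨rfl, h⟩⟩
    · exact ⟨v, Or.inr ⟨rfl, h⟩⟩

theorem IsTour.edge_injective {σ : Equiv.Perm V} (h : IsTour σ) (hc : 3 ≤ Fintype.card V) :
    Function.Injective fun v => s(v, σ v) := by
  intro u v huv
  rcases Sym2.eq_iff.1 huv with ⟨h1, _⟩ | ⟨h1, h2⟩
  · exact h1
  · exact absurd (by rw [← h1]; exact h2) (h.sq_ne hc v)

theorem IsTour.card_edges {σ : Equiv.Perm V} (h : IsTour σ) (hc : 3 ≤ Fintype.card V) :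
    (tourEdges σ).card = Fintype.card V := by
  rw [tourEdges, Finset.card_image_of_injective _ (h.edge_injective hc), Finset.card_univ]

theorem IsTour.weight_eq {σ : Equiv.Perm V} (h : IsTour σ) (hc : 3 ≤ Fintype.card V)
    (w : Sym2 V → ℝ) : tourWeight w σ = ∑ v, w s(v, σ v) := by
  rw [tourWeight, tourEdges, Finset.sum_image]
  exact fun u _ v _ huv => h.edge_injective hc huv

/-! ### Transport along an equivalence -/

section Transport

variable {U : Type*} [Fintype U] [DecidableEq U]

theorem isTour_permCongr (e : V ≃ U) (σ : Equiv.Perm V) (h : IsTour σ) :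
    IsTour (e.permCongr σ) := by
  obtain ⟨x, hx, _⟩ := id h.1
  have hne : ∀ v, (e.permCongr σ) v ≠ v := by
    intro v hv
    apply h.apply_ne (e.symm v)
    apply e.injective
    simpa [Equiv.permCongr_apply] using hv
  refine isTour_of_reach (e x) hne ?_
  intro v
  obtain ⟨m, hm⟩ := h.reach x (e.symm v)
  have hp : ∀ m : ℕ, ((e.permCongr σ) ^ m) (e x) = e ((σ ^ m) x) := by
    intro m
    induction m with
    | zero => simp
    | succ m ih =>
      rw [pow_succ', Equiv.Perm.mul_apply, ih, pow_succ', Equiv.Perm.mul_apply]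
      simp [Equiv.permCongr_apply]
  exact ⟨m, by rw [zpow_natCast, hp, hm]; simp⟩

theorem tourEdges_permCongr (e : V ≃ U) (σ : Equiv.Perm V) :
    tourEdges (e.permCongr σ) = (tourEdges σ).image (Sym2.map e) := by
  ext x
  simp only [tourEdges, Finset.mem_image, Finset.mem_univ, true_and]
  constructor
  · rintro ⟨v, rfl⟩
    exact ⟨_, ⟨e.symm v, rfl⟩, by simp [Equiv.permCongr_apply]⟩
  · rintro ⟨_, ⟨v, rfl⟩, rfl⟩
    exact ⟨e v, by simp [Equiv.permCongr_apply]⟩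

theorem tourWeight_permCongr (e : V ≃ U) (σ : Equiv.Perm V) (w : Sym2 U → ℝ) :
    tourWeight w (e.permCongr σ) = tourWeight (fun x => w (Sym2.map e x)) σ := by
  rw [tourWeight, tourEdges_permCongr, Finset.sum_image, tourWeight]
  exact fun a _ b _ hab => Sym2.map.injective e.injective hab

theorem improving_permCongr (e : V ≃ U) (k : ℕ) (σ τ : Equiv.Perm V) (w : Sym2 U → ℝ)
    (h : ImprovingKSwap (fun x => w (Sym2.map e x)) k σ τ) :
    ImprovingKSwap w k (e.permCongr σ) (e.permCongr τ) := by
  obtain ⟨⟨h1, h2⟩, h3⟩ := h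
  refine ⟨⟨isTour_permCongr e τ h1, ?_⟩, ?_⟩
  · rw [tourEdges_permCongr, tourEdges_permCongr,
      ← Finset.image_sdiff _ _ (Sym2.map.injective e.injective)]
    exact Finset.card_image_le.trans h2
  · rw [tourWeight_permCongr, tourWeight_permCongr]
    exact h3

end Transport

/-- Abstract counting argument: a potential which grows slowly along improving swaps and is
large at local optima forces long sequences. -/
theorem length_bound (w : Sym2 V → ℝ) (k B M : ℕ) (Inv : Equiv.Perm V → ℕ → Prop)
    (hstep : ∀ σ τ p, Inv σ p → ImprovingKSwap w k σ τ → ∃ q, q ≤ p + B ∧ Inv τ q)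
    (hopt : ∀ σ p, Inv σ p → IsLocalOpt w k σ → M ≤ p) :
    ∀ (l : List (Equiv.Perm V)) (σ : Equiv.Perm V) (p : ℕ), Inv σ p →
      MaximalImprovingSwapSeq w k σ l → M ≤ p + l.length * B := by
  intro l
  induction l with
  | nil =>
    intro σ p hI hm
    have := hopt σ p hI hm.2
    simpa using this
  | cons τ l ih =>
    intro σ p hI hm
    obtain ⟨⟨h1, h2⟩, h3⟩ := hm
    obtain ⟨q, hq, hIq⟩ := hstep σ τ p hI h1
    have := ih τ q hIq ⟨h2, by simpa using h3⟩
    rw [List.length_cons, Nat.add_mul]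
    omega

/-! ### The layered instance -/

section Layered

/-- Positions: layer and state. -/
abbrev Pos (R N : ℕ) := Fin (R + 1) × ZMod N

/-- Vertices: every position is split into an exit vertex (`inl`) and an entry vertex (`inr`). -/
abbrev Vert (R N : ℕ) := Pos R N ⊕ Pos R N

variable {R N : ℕ}

/-- The partner under the forced edges. -/
def fwd (t : Pos R N) : Pos R N := (t.1, t.2 + 1)

def fwdPerm (R N : ℕ) : Equiv.Perm (Pos R N) where
  toFun := fwd
  invFun := fun t => (t.1, t.2 - 1)
  left_inv := fun t => by simp [fwd]
  right_inv := fun t => by simp [fwd]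

theorem fwd_injective : Function.Injective (fwd : Pos R N → Pos R N) :=
  (fwdPerm R N).injective

theorem fwd_surjective : Function.Surjective (fwd : Pos R N → Pos R N) :=
  (fwdPerm R N).surjective

/-- The permutation of the vertices following forced edges and the edges of the matching `μ`. -/
def tourOf (μ : Equiv.Perm (Pos R N)) : Equiv.Perm (Vert R N) :=
  (Equiv.sumCongr μ (fwdPerm R N)).trans (Equiv.sumComm _ _)

@[simp] theorem tourOf_inl (μ : Equiv.Perm (Pos R N)) (b : Pos R N) :
    tourOf μ (Sum.inl b) = Sum.inr (μ b) := rfl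

@[simp] theorem tourOf_inr (μ : Equiv.Perm (Pos R N)) (t : Pos R N) :
    tourOf μ (Sum.inr t) = Sum.inl (fwd t) := rfl

/-- The matching belonging to a sequence of states. -/
def muOf (s : Fin (R + 1) → ZMod N) : Equiv.Perm (Pos R N) where
  toFun := fun b => if b.2 = s b.1 then (b.1 + 1, s (b.1 + 1)) else b
  invFun := fun b => if b.2 = s b.1 then (b.1 - 1, s (b.1 - 1)) else b
  left_inv := fun b => by
    by_cases h : b.2 = s b.1
    · simp [h]; ext <;> simp [h]
    · simp [h]
  right_inv := fun b => by
    by_cases h : b.2 = s b.1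
    · simp [h]; ext <;> simp [h]
    · simp [h]

theorem muOf_apply (s : Fin (R + 1) → ZMod N) (b : Pos R N) :
    muOf s b = if b.2 = s b.1 then (b.1 + 1, s (b.1 + 1)) else b := rfl

theorem muOf_self (s : Fin (R + 1) → ZMod N) (i : Fin (R + 1)) :
    muOf s (i, s i) = (i + 1, s (i + 1)) := by simp [muOf_apply]

theorem muOf_of_ne (s : Fin (R + 1) → ZMod N) (i : Fin (R + 1)) (x : ZMod N) (h : x ≠ s i) :
    muOf s (i, x) = (i, x) := by simp [muOf_apply, h]

theorem layer_ne (hR : 1 ≤ R) (i : Fin (R + 1)) : i + 1 ≠ i := by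
  intro h
  have h1 : (1 : Fin (R + 1)) = 0 := by simpa using h
  have h2 := congrArg Fin.val h1
  rw [Fin.val_one', Fin.val_zero, Nat.mod_eq_of_lt (by omega)] at h2
  omega

/-- Every sequence of states gives a tour. -/
theorem isTour_tourOf [NeZero N] (s : Fin (R + 1) → ZMod N) : IsTour (tourOf (muOf s)) := by
  set σ := tourOf (muOf s) with hσ
  have hin : ∀ (i : Fin (R + 1)) (j : ℕ), j < N →
      σ.SameCycle (Sum.inr (i, s i)) (Sum.inr (i, s i + (j : ZMod N))) := by
    intro i j
    induction j with
    | zero => intro _; simpa using Equiv.Perm.SameCycle.refl _ _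
    | succ j ih =>
      intro hj
      have h1 := ih (by omega)
      rw [← Equiv.Perm.sameCycle_apply_right, ← Equiv.Perm.sameCycle_apply_right] at h1
      have hne : s i + (j : ZMod N) + 1 ≠ s i := by
        intro h
        have h2 : ((j + 1 : ℕ) : ZMod N) = 0 := by
          push_cast
          linear_combination h
        rw [ZMod.natCast_eq_zero_iff] at h2
        exact absurd (Nat.le_of_dvd (by omega) h2) (by omega)
      rw [hσ, tourOf_inr, tourOf_inl, fwd, muOf_of_ne _ _ _ hne, ← hσ] at h1
      push_cast
      rw [← add_assoc]
      exact h1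
  have hr : ∀ i x, σ.SameCycle (Sum.inr (i, s i)) (Sum.inr (i, x)) := by
    intro i x
    have h := hin i (x - s i).val (ZMod.val_lt _)
    simpa using h
  have hl : ∀ i x, σ.SameCycle (Sum.inr (i, s i)) (Sum.inl (i, x)) := by
    intro i x
    have h := hr i (x - 1)
    rw [← Equiv.Perm.sameCycle_apply_right] at h
    simpa [hσ, fwd] using h
  have hnext : ∀ i, σ.SameCycle (Sum.inr (i, s i)) (Sum.inr (i + 1, s (i + 1))) := by
    intro i
    have h := hl i (s i)
    rw [← Equiv.Perm.sameCycle_apply_right] at h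
    rwa [hσ, tourOf_inl, muOf_self] at h
  have hall : ∀ i, σ.SameCycle (Sum.inr (0, s 0)) (Sum.inr (i, s i)) := by
    intro i
    induction i using Fin.induction with
    | zero => exact Equiv.Perm.SameCycle.refl _ _
    | succ i ih =>
      have h := hnext i.castSucc
      rw [Fin.coeSucc_eq_succ] at h
      exact ih.trans h
  refine isTour_of_reach (Sum.inr (0, s 0)) ?_ ?_
  · rintro (b | t) <;> simp [hσ]
  · rintro (⟨i, x⟩ | ⟨i, x⟩)
    · exact (hall i).trans (hl i x)
    · exact (hall i).trans (hr i x)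

theorem mem_edges_tourOf [NeZero N] {μ : Equiv.Perm (Pos R N)} {b t : Pos R N} :
    s(Sum.inl b, Sum.inr t) ∈ tourEdges (tourOf μ) ↔ μ b = t ∨ b = fwd t := by
  rw [mem_tourEdges]
  simp [eq_comm]

theorem mem_edges_tourOf_iff [NeZero N] {μ : Equiv.Perm (Pos R N)} {e : Sym2 (Vert R N)} :
    e ∈ tourEdges (tourOf μ) ↔
      ∃ b t, e = s(Sum.inl b, Sum.inr t) ∧ (μ b = t ∨ b = fwd t) := by
  constructor
  · intro h
    obtain ⟨v, -, rfl⟩ := Finset.mem_image.1 h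
    rcases v with b | t
    · exact ⟨b, μ b, rfl, Or.inl rfl⟩
    · exact ⟨fwd t, t, Sym2.eq_swap, Or.inr rfl⟩
  · rintro ⟨b, t, rfl, h⟩
    exact mem_edges_tourOf.2 h

/-- Changing one layer is a 3-swap. -/
theorem card_sdiff_le_three [NeZero N] (s s' : Fin (R + 1) → ZMod N) (j : Fin (R + 1))
    (h : ∀ i, i ≠ j → s i = s' i) :
    (tourEdges (tourOf (muOf s)) \ tourEdges (tourOf (muOf s'))).card ≤ 3 := by
  have hsub : tourEdges (tourOf (muOf s)) \ tourEdges (tourOf (muOf s')) ⊆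
      ({(j - 1, s (j - 1)), (j, s j), (j, s' j)} : Finset (Pos R N)).image
        fun b => s(Sum.inl b, Sum.inr (muOf s b)) := by
    intro e he
    rw [Finset.mem_sdiff] at he
    obtain ⟨b, t, rfl, hbt⟩ := mem_edges_tourOf_iff.1 he.1
    have h2 := fun h => he.2 (mem_edges_tourOf.2 h)
    rcases hbt with hbt | hbt
    · have hne : muOf s' b ≠ muOf s b := by
        rw [hbt]; exact fun h => h2 (Or.inl h)
      refine Finset.mem_image.2 ⟨b, ?_, by rw [hbt]⟩
      obtain ⟨i, x⟩ := b
      by_contra hcon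
      simp only [Finset.mem_insert, Finset.mem_singleton, Prod.mk.injEq, not_or, not_and] at hcon
      obtain ⟨h3, h4, h5⟩ := hcon
      apply hne
      rw [muOf_apply, muOf_apply]
      by_cases hij : i = j
      · subst hij
        simp [h4, h5]
      · have e1 := h i hij
        by_cases hij' : i + 1 = j
        · have hi : i = j - 1 := by rw [← hij']; simp
          have := h3 hi
          rw [← hi] at this
          simp [this, ← e1]
        · have e2 := h (i + 1) hij'
          simp [e1, e2]
    · exact absurd (Or.inr hbt) h2
  refine (Finset.card_le_card hsub).trans (Finset.card_image_le.trans Finset.card_le_three)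

/-- The number of changed layers is bounded by the number of changed edges. -/
theorem card_changed_le [NeZero N] (hR : 1 ≤ R) (hN : 2 ≤ N) (s s' : Fin (R + 1) → ZMod N) :
    (Finset.univ.filter fun i => s i ≠ s' i).card ≤
      (tourEdges (tourOf (muOf s)) \ tourEdges (tourOf (muOf s'))).card := by
  refine Finset.card_le_card_of_injOn
    (fun i => s(Sum.inl (i, s' i), Sum.inr (i, s' i))) ?_ ?_
  · intro i hi
    have hi : s i ≠ s' i := by simpa using hi
    simp only [Finset.coe_sdiff, Set.mem_sdiff, Finset.mem_coe]
    rw [mem_edges_tourOf, mem_edges_tourOf]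
    refine ⟨Or.inl (muOf_of_ne s i _ hi.symm), ?_⟩
    rw [muOf_self]
    rintro (h | h)
    · exact layer_ne hR i (congrArg Prod.fst h)
    · have h1 := congrArg Prod.snd h
      simp only [fwd] at h1
      have h2 : ((1 : ℕ) : ZMod N) = 0 := by
        push_cast
        linear_combination -h1
      rw [ZMod.natCast_eq_zero_iff] at h2
      exact absurd (Nat.le_of_dvd (by omega) h2) (by omega)
  · intro i _ j _ hij
    have := Sym2.eq_iff.1 hij
    simp at this
    exact this.1


/-! ### Weights -/

/-- Upper bound for the extra weight of a hop. -/
noncomputable def cA (R : ℕ) : ℝ := 2 * 3 ^ R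

/-- Weight unit of the edges which are not forced. -/
noncomputable def cH (R : ℕ) : ℝ := (R + 1) * cA R + 1

/-- Prohibitive weight. -/
noncomputable def cBig (R N : ℕ) [NeZero N] : ℝ := ((Fintype.card (Pos R N) : ℝ) + 1) * cH R

/-- Admissible hops. -/
def hopOK (i : Fin (R + 1)) (x y : ZMod N) : Prop :=
  if i = Fin.last R then y = 0 else (y - 2 * x).val ≤ 2

/-- The extra weight of a hop. -/
noncomputable def hopW (i : Fin (R + 1)) (x y : ZMod N) : ℝ :=
  if i = Fin.last R then 0 else cA R - 3 ^ (R - i.val) * ((y - 2 * x).val : ℝ)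

open Classical in
/-- Weight of the edge between an exit vertex and an entry vertex. -/
noncomputable def cost [NeZero N] (b t : Pos R N) : ℝ :=
  if b = fwd t then 0
  else if b = t ∧ b ≠ (0, 0) then cH R
  else if t.1 = b.1 + 1 ∧ hopOK b.1 b.2 t.2 then cH R + hopW b.1 b.2 t.2
  else cBig R N

/-- Weight function before passing to unordered pairs. -/
noncomputable def preW [NeZero N] : Vert R N → Vert R N → ℝ
  | Sum.inl b, Sum.inr t => cost b t
  | Sum.inr t, Sum.inl b => cost b t
  | Sum.inl _, Sum.inl _ => cBig R N
  | Sum.inr _, Sum.inr _ => cBig R N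

/-- The weights of the instance. -/
noncomputable def instW (R N : ℕ) [NeZero N] : Sym2 (Vert R N) → ℝ :=
  Sym2.lift ⟨preW, by rintro (a | a) (b | b) <;> rfl⟩

theorem cA_pos : 0 < cA R := by unfold cA; positivity

theorem cH_pos : 0 < cH R := by
  have := cA_pos (R := R)
  unfold cH; positivity

theorem cBig_ge [NeZero N] : cH R ≤ cBig R N := by
  have := cH_pos (R := R)
  unfold cBig
  nlinarith [Nat.cast_nonneg (α := ℝ) (Fintype.card (Pos R N))]

theorem hopW_nonneg (i : Fin (R + 1)) (x y : ZMod N) (h : hopOK i x y) : 0 ≤ hopW i x y := by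
  unfold hopOK at h
  unfold hopW
  split_ifs at h ⊢ with hi
  · exact le_refl _
  · have h1 : ((y - 2 * x).val : ℝ) ≤ 2 := by exact_mod_cast h
    have h2 : (3 : ℝ) ^ (R - i.val) ≤ 3 ^ R :=
      pow_le_pow_right₀ (by norm_num) (Nat.sub_le _ _)
    have h3 : (0 : ℝ) < 3 ^ (R - i.val) := by positivity
    unfold cA
    nlinarith

theorem cost_ge [NeZero N] (b t : Pos R N) (h : b ≠ fwd t) : cH R ≤ cost b t := by
  unfold cost
  rw [if_neg h]
  split_ifs with h1 h2
  · exact le_refl _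
  · linarith [hopW_nonneg _ _ _ h2.2]
  · exact cBig_ge

theorem cost_nonneg [NeZero N] (b t : Pos R N) : 0 ≤ cost b t := by
  by_cases h : b = fwd t
  · simp [cost, h]
  · exact cH_pos.le.trans (cost_ge b t h)

theorem instW_nonneg [NeZero N] (e : Sym2 (Vert R N)) : 0 ≤ instW R N e := by
  induction e using Sym2.ind with
  | _ u v =>
    rcases u with u | u <;> rcases v with v | v
    · exact cH_pos.le.trans cBig_ge
    · exact cost_nonneg _ _
    · exact cost_nonneg _ _
    · exact cH_pos.le.trans cBig_ge

@[simp] theorem instW_lr [NeZero N] (b t : Pos R N) :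
    instW R N s(Sum.inl b, Sum.inr t) = cost b t := rfl

@[simp] theorem instW_rl [NeZero N] (b t : Pos R N) :
    instW R N s(Sum.inr t, Sum.inl b) = cost b t := rfl

/-- Valid state sequences. -/
def ValidS (s : Fin (R + 1) → ZMod N) : Prop :=
  s 0 = 0 ∧ ∀ i, hopOK i (s i) (s (i + 1))

theorem card_vert [NeZero N] (hR : 1 ≤ R) (hN : 2 ≤ N) : 3 ≤ Fintype.card (Vert R N) := by
  rw [Fintype.card_sum, Fintype.card_prod, Fintype.card_fin, ZMod.card]
  nlinarith

theorem one_ne_zero_zmod (hN : 2 ≤ N) : (1 : ZMod N) ≠ 0 := by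
  intro h
  have h2 : ((1 : ℕ) : ZMod N) = 0 := by simpa using h
  rw [ZMod.natCast_eq_zero_iff] at h2
  exact absurd (Nat.le_of_dvd (by omega) h2) (by omega)

theorem ne_fwd (hN : 2 ≤ N) (t : Pos R N) : t ≠ fwd t := by
  intro h
  have := congrArg Prod.snd h
  simp only [fwd] at this
  exact one_ne_zero_zmod hN (by linear_combination -this)

theorem weight_tourOf [NeZero N] (hR : 1 ≤ R) (hN : 2 ≤ N) (s : Fin (R + 1) → ZMod N)
    (hs : ValidS s) :
    tourWeight (instW R N) (tourOf (muOf s)) =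
      (Fintype.card (Pos R N) : ℝ) * cH R + ∑ i, hopW i (s i) (s (i + 1)) := by
  rw [(isTour_tourOf s).weight_eq (card_vert hR hN), Fintype.sum_sum_type]
  have h1 : ∀ t : Pos R N, instW R N s(Sum.inr t, tourOf (muOf s) (Sum.inr t)) = 0 := by
    intro t; simp [cost]
  have h2 : ∀ b : Pos R N, instW R N s(Sum.inl b, tourOf (muOf s) (Sum.inl b)) =
      cH R + if b.2 = s b.1 then hopW b.1 (s b.1) (s (b.1 + 1)) else 0 := by
    rintro ⟨i, x⟩
    rw [tourOf_inl, instW_lr]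
    by_cases hx : x = s i
    · subst hx
      rw [muOf_self, cost, if_neg, if_neg, if_pos]
      · simp
      · exact ⟨rfl, hs.2 i⟩
      · exact fun h => layer_ne hR i (congrArg Prod.fst h.1).symm
      · exact fun h => layer_ne hR i (congrArg Prod.fst h).symm
    · rw [muOf_of_ne _ _ _ hx, cost, if_neg (ne_fwd hN _), if_pos]
      · simp [hx]
      · refine ⟨rfl, fun h => hx ?_⟩
        have e1 := congrArg Prod.fst h
        have e2 := congrArg Prod.snd h
        simp only at e1 e2
        rw [e1, e2, hs.1]
  simp only [h1, h2, Finset.sum_const_zero, add_zero, Finset.sum_add_distrib, Finset.sum_const,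
    Finset.card_univ, nsmul_eq_mul]
  congr 1
  rw [Fintype.sum_prod_type]
  simp

theorem weight_lt [NeZero N] (hR : 1 ≤ R) (hN : 2 ≤ N) (s : Fin (R + 1) → ZMod N)
    (hs : ValidS s) : tourWeight (instW R N) (tourOf (muOf s)) < cBig R N := by
  rw [weight_tourOf hR hN s hs]
  have h : ∑ i, hopW i (s i) (s (i + 1)) ≤ ∑ _i : Fin (R + 1), cA R := by
    refine Finset.sum_le_sum fun i _ => ?_
    unfold hopW
    split_ifs
    · exact cA_pos.le
    · have : (0 : ℝ) ≤ 3 ^ (R - i.val) * ((s (i + 1) - 2 * s i).val : ℝ) := by positivity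
      linarith
  rw [Finset.sum_const, Finset.card_univ, Fintype.card_fin, nsmul_eq_mul] at h
  push_cast at h
  have h2 : cH R = (R + 1) * cA R + 1 := rfl
  unfold cBig
  linarith

/-! ### Cheap tours are structured -/

/-- The forced edges. -/
def forced (R N : ℕ) [NeZero N] : Finset (Sym2 (Vert R N)) :=
  Finset.univ.image fun t : Pos R N => s(Sum.inr t, Sum.inl (fwd t))

theorem edge_cases [NeZero N] (e : Sym2 (Vert R N)) (h : instW R N e < cBig R N) :
    ∃ b t, e = s(Sum.inl b, Sum.inr t) ∧ cost b t < cBig R N := by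
  induction e using Sym2.ind with
  | _ u v =>
    rcases u with u | u <;> rcases v with v | v
    · exact absurd h (lt_irrefl _)
    · exact ⟨u, v, rfl, h⟩
    · exact ⟨v, u, Sym2.eq_swap, h⟩
    · exact absurd h (lt_irrefl _)

theorem edge_small [NeZero N] (σ : Equiv.Perm (Vert R N))
    (hw : tourWeight (instW R N) σ < cBig R N) (e : Sym2 (Vert R N)) (he : e ∈ tourEdges σ) :
    instW R N e < cBig R N :=
  lt_of_le_of_lt (Finset.single_le_sum (fun e _ => instW_nonneg e) he) hw

theorem forced_subset [NeZero N] (hR : 1 ≤ R) (hN : 2 ≤ N) (σ : Equiv.Perm (Vert R N))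
    (hσ : IsTour σ) (hw : tourWeight (instW R N) σ < cBig R N) :
    forced R N ⊆ tourEdges σ := by
  set p := Fintype.card (Pos R N) with hp
  have hcard : (tourEdges σ).card = p + p := by
    rw [hσ.card_edges (card_vert hR hN), Fintype.card_sum]
  have h1 : ((tourEdges σ \ forced R N).card : ℝ) * cH R < ((p : ℝ) + 1) * cH R := by
    refine lt_of_le_of_lt ?_ hw
    calc ((tourEdges σ \ forced R N).card : ℝ) * cH R
        = ∑ _e ∈ tourEdges σ \ forced R N, cH R := by rw [Finset.sum_const, nsmul_eq_mul]
      _ ≤ ∑ e ∈ tourEdges σ \ forced R N, instW R N e := by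
          refine Finset.sum_le_sum fun e he => ?_
          rw [Finset.mem_sdiff] at he
          obtain ⟨b, t, rfl, _⟩ := edge_cases e (edge_small σ hw e he.1)
          rw [instW_lr]
          refine cost_ge b t fun h => he.2 ?_
          subst h
          exact Finset.mem_image.2 ⟨t, Finset.mem_univ _, Sym2.eq_swap⟩
      _ ≤ tourWeight (instW R N) σ :=
          Finset.sum_le_sum_of_subset_of_nonneg Finset.sdiff_subset
            fun e _ _ => instW_nonneg e
  have h2 : (tourEdges σ \ forced R N).card < p + 1 := by
    have := lt_of_mul_lt_mul_right h1 cH_pos.le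
    exact_mod_cast this
  have h3 : (forced R N).card ≤ p := by
    refine Finset.card_image_le.trans ?_
    rw [Finset.card_univ]
  have h4 := Finset.card_sdiff_add_card_inter (tourEdges σ) (forced R N)
  have h5 : tourEdges σ ∩ forced R N = forced R N :=
    Finset.eq_of_subset_of_card_le Finset.inter_subset_right (by omega)
  rw [← h5]
  exact Finset.inter_subset_left

theorem oriented_aux [NeZero N] (hR : 1 ≤ R) (hN : 2 ≤ N) (σ : Equiv.Perm (Vert R N))
    (hσ : IsTour σ) (hw : tourWeight (instW R N) σ < cBig R N)
    (t₀ : Pos R N) (h₀ : σ (Sum.inr t₀) = Sum.inl (fwd t₀)) :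
    ∃ μ : Equiv.Perm (Pos R N), σ = tourOf μ := by
  have hsq := hσ.sq_ne (card_vert hR hN)
  have hF : ∀ t, σ (Sum.inr t) = Sum.inl (fwd t) ∨ σ (Sum.inl (fwd t)) = Sum.inr t := by
    intro t
    exact mem_tourEdges.1 (forced_subset hR hN σ hσ hw
      (Finset.mem_image.2 ⟨t, Finset.mem_univ _, rfl⟩))
  have hl : ∀ b, ∃ t, σ (Sum.inl b) = Sum.inr t := by
    intro b
    obtain ⟨b', t, h, _⟩ := edge_cases s(Sum.inl b, σ (Sum.inl b))
      (edge_small σ hw _ (mem_tourEdges.2 (Or.inl rfl)))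
    rcases Sym2.eq_iff.1 h with ⟨_, h⟩ | ⟨h, _⟩
    · exact ⟨t, h⟩
    · simp at h
  let Q : Vert R N → Prop := fun v =>
    (∃ t, v = Sum.inr t ∧ σ v = Sum.inl (fwd t)) ∨
      (∃ t, v = Sum.inl (fwd t) ∧ σ (Sum.inr t) = v)
  have hQ : ∀ v, Q v → Q (σ v) := by
    rintro v (⟨t, rfl, h⟩ | ⟨t, rfl, h⟩)
    · exact Or.inr ⟨t, h, rfl⟩
    · obtain ⟨t₁, h₁⟩ := hl (fwd t)
      left
      refine ⟨t₁, h₁, ?_⟩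
      rw [h₁]
      rcases hF t₁ with h2 | h2
      · exact h2
      · exfalso
        rw [← h₁] at h2
        have h3 := σ.injective h2
        have h4 : t₁ = t := fwd_injective (Sum.inl_injective h3)
        subst h4
        exact hsq (Sum.inr t₁) (by rw [h, h₁])
  have hQall : ∀ v, Q v := by
    intro v
    obtain ⟨m, rfl⟩ := hσ.reach (Sum.inr t₀) v
    induction m with
    | zero => exact Or.inl ⟨t₀, rfl, h₀⟩
    | succ m ih =>
      rw [pow_succ', Equiv.Perm.mul_apply]
      exact hQ _ ih
  have hr : ∀ t, σ (Sum.inr t) = Sum.inl (fwd t) := by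
    intro t
    rcases hQall (Sum.inr t) with ⟨t', h1, h2⟩ | ⟨t', h1, _⟩
    · rw [h2, Sum.inr_injective h1]
    · simp at h1
  choose f hf using hl
  have hinj : Function.Injective f := by
    intro a b hab
    have : σ (Sum.inl a) = σ (Sum.inl b) := by rw [hf, hf, hab]
    exact Sum.inl_injective (σ.injective this)
  refine ⟨Equiv.ofBijective f (Finite.injective_iff_bijective.1 hinj), ?_⟩
  ext v
  rcases v with b | t
  · rw [hf, tourOf_inl]; rfl
  · rw [hr, tourOf_inr]

theorem exists_mu [NeZero N] (hR : 1 ≤ R) (hN : 2 ≤ N) (σ : Equiv.Perm (Vert R N))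
    (hσ : IsTour σ) (hw : tourWeight (instW R N) σ < cBig R N) :
    ∃ μ : Equiv.Perm (Pos R N), tourEdges σ = tourEdges (tourOf μ) ∧ IsTour (tourOf μ) := by
  by_cases h : ∃ t, σ (Sum.inr t) = Sum.inl (fwd t)
  · obtain ⟨t, ht⟩ := h
    obtain ⟨μ, hμ⟩ := oriented_aux hR hN σ hσ hw t ht
    exact ⟨μ, by rw [hμ], hμ ▸ hσ⟩
  · push Not at h
    have hw' : tourWeight (instW R N) σ⁻¹ < cBig R N := by
      rw [tourWeight, tourEdges_inv]; exact hw
    have h0 := mem_tourEdges.1 (forced_subset hR hN σ hσ hw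
      (Finset.mem_image.2 ⟨((0, 0) : Pos R N), Finset.mem_univ _, rfl⟩))
    have h1 : σ⁻¹ (Sum.inr ((0, 0) : Pos R N)) = Sum.inl (fwd (0, 0)) := by
      rw [Equiv.Perm.inv_eq_iff_eq]
      rcases h0 with h0 | h0
      · exact absurd h0 (h _)
      · exact h0.symm
    obtain ⟨μ, hμ⟩ := oriented_aux hR hN σ⁻¹ hσ.inv hw' (0, 0) h1
    exact ⟨μ, by rw [← hμ, tourEdges_inv], hμ ▸ hσ.inv⟩

theorem exists_states [NeZero N] (hR : 1 ≤ R) (hN : 2 ≤ N) (σ : Equiv.Perm (Vert R N))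
    (hσ : IsTour σ) (hw : tourWeight (instW R N) σ < cBig R N) :
    ∃ s : Fin (R + 1) → ZMod N, ValidS s ∧ tourEdges σ = tourEdges (tourOf (muOf s)) := by
  obtain ⟨μ, hμ, hT⟩ := exists_mu hR hN σ hσ hw
  have hw' : tourWeight (instW R N) (tourOf μ) < cBig R N := by
    rw [tourWeight, ← hμ]; exact hw
  have hdich : ∀ b, (μ b = b ∧ b ≠ (0, 0)) ∨ ((μ b).1 = b.1 + 1 ∧ hopOK b.1 b.2 (μ b).2) := by
    intro b
    have h1 := edge_small (tourOf μ) hw' s(Sum.inl b, Sum.inr (μ b))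
      (mem_tourEdges.2 (Or.inl rfl))
    rw [instW_lr] at h1
    have h2 : b ≠ fwd (μ b) := by
      intro h
      have := hT.sq_ne (card_vert hR hN) (Sum.inl b)
      rw [tourOf_inl, tourOf_inr, ← h] at this
      exact this rfl
    unfold cost at h1
    rw [if_neg h2] at h1
    split_ifs at h1 with h3 h4
    · exact Or.inl ⟨h3.1.symm, h3.2⟩
    · exact Or.inr h4
    · exact absurd h1 (lt_irrefl _)
  have hhop : ∀ b, μ b ≠ b → (μ b).1 = b.1 + 1 ∧ hopOK b.1 b.2 (μ b).2 := by
    intro b hb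
    rcases hdich b with h | h
    · exact absurd h.1 hb
    · exact h
  have h00 : μ (0, 0) ≠ (0, 0) := by
    intro h
    rcases hdich (0, 0) with h1 | h1
    · exact h1.2 rfl
    · rw [h] at h1
      exact layer_ne hR _ h1.1.symm
  have hpre : ∀ b, μ b ≠ b → ∃ a, μ a = b ∧ μ a ≠ a := by
    intro b hb
    refine ⟨μ.symm b, by simp, ?_⟩
    intro h
    rw [Equiv.apply_symm_apply] at h
    apply hb
    conv_lhs => rw [h]
    simp
  have hzero : ∀ x, μ (0, x) ≠ (0, x) → x = 0 := by
    intro x hx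
    obtain ⟨⟨i, y⟩, ha, ha'⟩ := hpre _ hx
    have h1 := hhop _ ha'
    rw [ha] at h1
    have hi : i = Fin.last R := by
      have h2 : i + 1 = Fin.last R + 1 := by rw [Fin.last_add_one]; exact h1.1.symm
      exact add_right_cancel h2
    have h3 := h1.2
    simp only [hopOK, hi, if_true] at h3
    exact h3
  have hex : ∀ i : Fin (R + 1), ∃ s, ∀ x, μ (i, x) ≠ (i, x) ↔ x = s := by
    intro i
    induction i using Fin.induction with
    | zero => exact ⟨0, fun x => ⟨hzero x, fun h => by rw [h]; exact h00⟩⟩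
    | succ i ih =>
      obtain ⟨s, hs⟩ := ih
      have hm := hhop _ ((hs s).2 rfl)
      have hm1 : μ (i.castSucc, s) = (i.succ, (μ (i.castSucc, s)).2) := by
        ext
        · rw [hm.1, Fin.coeSucc_eq_succ]
        · rfl
      refine ⟨(μ (i.castSucc, s)).2, fun x => ⟨?_, ?_⟩⟩
      · intro hx
        obtain ⟨⟨j, y⟩, ha, ha'⟩ := hpre _ hx
        have h1 := hhop _ ha'
        rw [ha] at h1
        have hj : j = i.castSucc := by
          have h2 : j + 1 = i.castSucc + 1 := by rw [Fin.coeSucc_eq_succ]; exact h1.1.symm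
          exact add_right_cancel h2
        subst hj
        have hy := (hs y).1 ha'
        subst hy
        rw [ha]
      · rintro rfl h
        rw [← hm1] at h
        have h2 := μ.injective h
        have h3 := congrArg Prod.fst h2
        rw [hm.1] at h3
        exact layer_ne hR _ h3
  choose s hs using hex
  have hnext : ∀ i, μ (i, s i) = (i + 1, s (i + 1)) := by
    intro i
    have h1 := (hs i (s i)).2 rfl
    have h2 := hhop _ h1
    have h3 : μ (i, s i) = (i + 1, (μ (i, s i)).2) := by
      ext
      · rw [h2.1]
      · rfl
    have h4 : (μ (i, s i)).2 = s (i + 1) := by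
      rw [← hs]
      intro h
      rw [← h3] at h
      have h5 := congrArg Prod.fst (μ.injective h)
      rw [h2.1] at h5
      exact layer_ne hR _ h5
    rw [h3, h4]
  have hμs : μ = muOf s := by
    ext1 ⟨i, x⟩
    by_cases hx : x = s i
    · subst hx
      rw [muOf_self, hnext]
    · rw [muOf_of_ne _ _ _ hx]
      by_contra h
      exact hx ((hs i x).1 h)
  refine ⟨s, ⟨((hs 0 0).1 h00).symm, fun i => ?_⟩, by rw [hμ, hμs]⟩
  have h1 := (hhop _ ((hs i (s i)).2 rfl)).2
  rwa [hnext] at h1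

/-! ### The redundant binary counter -/

/-- Value of the first digits. -/
def phi (ε : ℕ → ℕ) : ℕ → ℕ
  | 0 => 0
  | i + 1 => 2 * phi ε i + ε i

/-- The states belonging to a sequence of digits. -/
def st (R N : ℕ) (ε : ℕ → ℕ) : Fin (R + 1) → ZMod N := fun i => (phi ε i.val : ZMod N)

theorem st_digit (ε : ℕ → ℕ) (j : Fin R) :
    st R N ε (j.castSucc + 1) - 2 * st R N ε j.castSucc = ((ε j.val : ℕ) : ZMod N) := by
  rw [Fin.coeSucc_eq_succ]
  simp [st, phi]

theorem st_digit_val (hN : 3 ≤ N) (ε : ℕ → ℕ) (hε : ∀ i, ε i ≤ 2) (j : Fin R) :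
    (st R N ε (j.castSucc + 1) - 2 * st R N ε j.castSucc).val = ε j.val := by
  rw [st_digit, ZMod.val_natCast_of_lt]
  have := hε j.val
  omega

theorem valid_st (hN : 3 ≤ N) (ε : ℕ → ℕ) (hε : ∀ i, ε i ≤ 2) : ValidS (st R N ε) := by
  refine ⟨by simp [st, phi], fun i => ?_⟩
  induction i using Fin.lastCases with
  | last => simp [hopOK, st, phi]
  | cast j =>
    rw [hopOK, if_neg (Fin.castSucc_lt_last j).ne, st_digit_val hN ε hε]
    exact hε _

theorem weight_st [NeZero N] (hR : 1 ≤ R) (hN : 3 ≤ N) (ε : ℕ → ℕ) (hε : ∀ i, ε i ≤ 2) :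
    tourWeight (instW R N) (tourOf (muOf (st R N ε))) =
      (Fintype.card (Pos R N) : ℝ) * cH R +
        ∑ i ∈ Finset.range R, (cA R - 3 ^ (R - i) * (ε i : ℝ)) := by
  rw [weight_tourOf hR (by omega) _ (valid_st hN ε hε), Fin.sum_univ_castSucc,
    Finset.sum_range]
  congr 1
  have h1 : hopW (Fin.last R) (st R N ε (Fin.last R)) (st R N ε (Fin.last R + 1)) = 0 := by
    simp [hopW]
  rw [h1, add_zero]
  refine Finset.sum_congr rfl fun j _ => ?_
  rw [hopW, if_neg (Fin.castSucc_lt_last j).ne, st_digit_val hN ε hε]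
  rfl

theorem exists_digits [NeZero N] (s : Fin (R + 1) → ZMod N) (hs : ValidS s) :
    ∃ ε : ℕ → ℕ, (∀ i, ε i ≤ 2) ∧ s = st R N ε := by
  let ε : ℕ → ℕ := fun i =>
    if h : i < R then (s (Fin.succ ⟨i, h⟩) - 2 * s (Fin.castSucc ⟨i, h⟩)).val else 0
  refine ⟨ε, fun i => ?_, ?_⟩
  · by_cases h : i < R
    · have h1 := hs.2 (Fin.castSucc ⟨i, h⟩)
      rw [hopOK, if_neg (Fin.castSucc_lt_last _).ne, Fin.coeSucc_eq_succ] at h1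
      simpa [ε, h] using h1
    · simp [ε, h]
  · funext i
    induction i using Fin.induction with
    | zero => simp [st, phi, hs.1]
    | succ i ih =>
      have h1 : ε i.val = (s i.succ - 2 * s i.castSucc).val := by
        simp only [ε, i.isLt, dif_pos]
      have h2 : st R N ε i.succ = 2 * st R N ε i.castSucc + ((ε i.val : ℕ) : ZMod N) := by
        simp [st, phi]
      rw [h2, ← ih, h1, ZMod.natCast_val, ZMod.cast_id]
      ring

theorem phi_close [NeZero N] (k : ℕ) (hN : 2 ^ (k + 2) ≤ N) (ε ε' : ℕ → ℕ)
    (hε : ∀ i, ε i ≤ 2) (hε' : ∀ i, ε' i ≤ 2) (i : ℕ)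
    (hk : ((Finset.range (i + 1)).filter
      fun j => (phi ε j : ZMod N) ≠ (phi ε' j : ZMod N)).card ≤ k) :
    |(phi ε' i : ℤ) - phi ε i| + 2 ≤ 2 ^ (((Finset.range (i + 1)).filter
      fun j => (phi ε j : ZMod N) ≠ (phi ε' j : ZMod N)).card + 1) := by
  induction i with
  | zero =>
    simp only [phi, sub_self, abs_zero, zero_add]
    rw [pow_succ]
    have : (1 : ℤ) ≤ 2 ^ ((Finset.range 1).filter
        fun j => (phi ε j : ZMod N) ≠ (phi ε' j : ZMod N)).card := one_le_pow₀ (by norm_num)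
    linarith
  | succ i ih =>
    rw [Finset.range_add_one, Finset.filter_insert] at hk ⊢
    have hlin : (phi ε' (i + 1) : ℤ) - phi ε (i + 1) =
        2 * ((phi ε' i : ℤ) - phi ε i) + ((ε' i : ℤ) - ε i) := by
      simp only [phi]; push_cast; ring
    have hd : |(ε' i : ℤ) - ε i| ≤ 2 := by
      have := hε i
      have := hε' i
      rw [abs_le]; omega
    have habs : |(phi ε' (i + 1) : ℤ) - phi ε (i + 1)| ≤
        2 * |(phi ε' i : ℤ) - phi ε i| + 2 := by
      rw [hlin]
      refine (abs_add_le _ _).trans ?_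
      rw [abs_mul]
      simpa using hd
    by_cases hc : (phi ε (i + 1) : ZMod N) ≠ (phi ε' (i + 1) : ZMod N)
    · rw [if_pos hc, Finset.card_insert_of_notMem (by simp)] at hk ⊢
      have := ih (by omega)
      rw [pow_succ]
      linarith
    · rw [if_neg hc] at hk ⊢
      have h1 := ih hk
      push Not at hc
      have hdvd : (N : ℤ) ∣ (phi ε' (i + 1) : ℤ) - phi ε (i + 1) := by
        rw [← ZMod.intCast_zmod_eq_zero_iff_dvd]
        push_cast
        rw [hc, sub_self]
      have h2 : (2 : ℤ) ^ (((Finset.range (i + 1)).filter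
          fun j => (phi ε j : ZMod N) ≠ (phi ε' j : ZMod N)).card + 1) ≤ 2 ^ (k + 1) :=
        pow_le_pow_right₀ (by norm_num) (by omega)
      have h3 : (2 : ℤ) ^ (k + 2) ≤ N := by exact_mod_cast hN
      have h4 : (2 : ℤ) ^ (k + 2) = 2 * 2 ^ (k + 1) := by ring
      have h5 : (phi ε' (i + 1) : ℤ) - phi ε (i + 1) = 0 :=
        Int.eq_zero_of_abs_lt_dvd hdvd (by linarith)
      rw [h5, abs_zero]
      linarith [abs_nonneg ((phi ε' i : ℤ) - phi ε i)]

theorem phi_step [NeZero N] (hR : 1 ≤ R) (k : ℕ) (hN : 2 ^ (k + 2) ≤ N) (ε ε' : ℕ → ℕ)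
    (hε : ∀ i, ε i ≤ 2) (hε' : ∀ i, ε' i ≤ 2)
    (hk : (tourEdges (tourOf (muOf (st R N ε))) \
      tourEdges (tourOf (muOf (st R N ε')))).card ≤ k) :
    phi ε' R ≤ phi ε R + 2 ^ (k + 1) := by
  have h2N : 2 ≤ N := by
    have : 2 ^ 1 ≤ 2 ^ (k + 2) := Nat.pow_le_pow_right (by norm_num) (by omega)
    omega
  have h1 := (card_changed_le hR h2N (st R N ε) (st R N ε')).trans hk
  have h2 : ((Finset.range (R + 1)).filter
      fun j => (phi ε j : ZMod N) ≠ (phi ε' j : ZMod N)).card ≤ k := by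
    refine le_trans ?_ h1
    refine le_trans (Finset.card_le_card ?_) (Finset.card_image_le (f := Fin.val))
    intro j hj
    rw [Finset.mem_filter, Finset.mem_range] at hj
    exact Finset.mem_image.2 ⟨⟨j, hj.1⟩, Finset.mem_filter.2 ⟨Finset.mem_univ _, hj.2⟩, rfl⟩
  have h3 := phi_close k hN ε ε' hε hε' R h2
  have h4 : (2 : ℤ) ^ (((Finset.range (R + 1)).filter
      fun j => (phi ε j : ZMod N) ≠ (phi ε' j : ZMod N)).card + 1) ≤ 2 ^ (k + 1) :=
    pow_le_pow_right₀ (by norm_num) (by omega)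
  have h5 := le_abs_self ((phi ε' R : ℤ) - phi ε R)
  have h6 : (phi ε' R : ℤ) ≤ phi ε R + 2 ^ (k + 1) := by linarith
  exact_mod_cast h6

/-- Increment or carry at digit `j`. -/
def bump (ε : ℕ → ℕ) (j : ℕ) : ℕ → ℕ :=
  fun i => if i = j then ε j + 1 else if i = j + 1 then 0 else ε i

theorem phi_bump (ε : ℕ → ℕ) (j : ℕ) (hj : j < R) (h : j + 1 < R → ε (j + 1) = 2) (i : ℕ)
    (hi : i ≤ R) :
    phi (bump ε j) i = if i = j + 1 then phi ε i + 1 else phi ε i := by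
  induction i with
  | zero => simp [phi]
  | succ i ih =>
    rw [phi, phi, ih (by omega)]
    by_cases h1 : i = j
    · subst h1
      simp [bump]; ring
    · by_cases h2 : i = j + 1
      · subst h2
        have := h (by omega)
        simp [bump, this]; ring
      · simp [bump, h1, h2]

theorem bump_weight (ε : ℕ → ℕ) (hε : ∀ i, ε i ≤ 2) (j : ℕ) (hj : j < R) :
    ∑ i ∈ Finset.range R, (cA R - 3 ^ (R - i) * (bump ε j i : ℝ)) <
      ∑ i ∈ Finset.range R, (cA R - 3 ^ (R - i) * (ε i : ℝ)) := by
  have h : ∀ i ∈ Finset.range R, (cA R - 3 ^ (R - i) * (bump ε j i : ℝ)) ≤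
      (cA R - 3 ^ (R - i) * (ε i : ℝ)) - (if i = j then (3 : ℝ) ^ (R - j) else 0)
        + (if i = j + 1 then (2 : ℝ) * 3 ^ (R - (j + 1)) else 0) := by
    intro i _
    by_cases h1 : i = j
    · subst h1
      simp [bump]; linarith
    · by_cases h2 : i = j + 1
      · subst h2
        have h3 : (ε (j + 1) : ℝ) ≤ 2 := by exact_mod_cast hε _
        have h4 : (0 : ℝ) < 3 ^ (R - (j + 1)) := by positivity
        simp [bump]; nlinarith
      · simp [bump, h1, h2]
  refine lt_of_le_of_lt (Finset.sum_le_sum h) ?_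
  rw [Finset.sum_add_distrib, Finset.sum_sub_distrib, Finset.sum_ite_eq', Finset.sum_ite_eq',
    if_pos (Finset.mem_range.2 hj)]
  have h5 : (3 : ℝ) ^ (R - j) = 3 * 3 ^ (R - (j + 1)) := by
    rw [← pow_succ']; congr 1; omega
  have h6 : (0 : ℝ) < 3 ^ (R - (j + 1)) := by positivity
  split_ifs <;> linarith

theorem phi_full (ε : ℕ → ℕ) (h : ∀ i, i < R → ε i = 2) (i : ℕ) (hi : i ≤ R) :
    phi ε i + 2 = 2 ^ (i + 1) := by
  induction i with
  | zero => simp [phi]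
  | succ i ih =>
    have := ih (by omega)
    rw [phi, h i (by omega), pow_succ]
    omega

/-- If some digit is not maximal, there is an improving 3-swap. -/
theorem exists_improving [NeZero N] (hR : 1 ≤ R) (hN : 3 ≤ N) (k : ℕ) (hk : 3 ≤ k) (ε : ℕ → ℕ)
    (hε : ∀ i, ε i ≤ 2) (h : ∃ i, i < R ∧ ε i ≠ 2) :
    ∃ τ, ImprovingKSwap (instW R N) k (tourOf (muOf (st R N ε))) τ := by
  obtain ⟨j, hj, hmax⟩ : ∃ j, (j < R ∧ ε j ≠ 2) ∧ ∀ i, i < R → ε i ≠ 2 → i ≤ j := by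
    have hne : ((Finset.range R).filter fun i => ε i ≠ 2).Nonempty := by
      obtain ⟨i, h1, h2⟩ := h
      exact ⟨i, by simp [h1, h2]⟩
    refine ⟨Finset.max' _ hne, ?_, fun i h1 h2 => Finset.le_max' _ i
      (Finset.mem_filter.2 ⟨Finset.mem_range.2 h1, h2⟩)⟩
    have h1 := Finset.mem_filter.1 (Finset.max'_mem _ hne)
    exact ⟨Finset.mem_range.1 h1.1, h1.2⟩
  have hbump : ∀ i, bump ε j i ≤ 2 := by
    intro i
    have := hε i
    have := hε j
    unfold bump
    split_ifs <;> omega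
  have hnext : j + 1 < R → ε (j + 1) = 2 := by
    intro h1
    by_contra h2
    have := hmax _ h1 h2
    omega
  refine ⟨tourOf (muOf (st R N (bump ε j))), ⟨isTour_tourOf _, ?_⟩, ?_⟩
  · refine (card_sdiff_le_three _ _ ⟨j + 1, by omega⟩ ?_).trans hk
    intro i hi
    have h1 : i.val ≠ j + 1 := fun h => hi (Fin.ext h)
    rw [st, st, phi_bump ε j hj.1 hnext i.val (by omega), if_neg h1]
  · rw [weight_st hR hN _ hε, weight_st hR hN _ hbump]
    linarith [bump_weight ε hε j hj.1]

/-- The invariant along improving sequences. -/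
def CounterInv (R N : ℕ) [NeZero N] (σ : Equiv.Perm (Vert R N)) (p : ℕ) : Prop :=
  ∃ ε : ℕ → ℕ, (∀ i, ε i ≤ 2) ∧ tourEdges σ = tourEdges (tourOf (muOf (st R N ε))) ∧ phi ε R = p

theorem inv_step [NeZero N] (hR : 1 ≤ R) (k : ℕ) (hN : 2 ^ (k + 2) ≤ N)
    (σ τ : Equiv.Perm (Vert R N)) (p : ℕ) (hI : CounterInv R N σ p)
    (h : ImprovingKSwap (instW R N) k σ τ) : ∃ q, q ≤ p + 2 ^ (k + 1) ∧ CounterInv R N τ q := by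
  obtain ⟨ε, hε, hσ, rfl⟩ := hI
  obtain ⟨⟨hτ, hcard⟩, hlt⟩ := h
  have h3N : 3 ≤ N := by
    have : 2 ^ 2 ≤ 2 ^ (k + 2) := Nat.pow_le_pow_right (by norm_num) (by omega)
    omega
  have hw : tourWeight (instW R N) τ < cBig R N := by
    refine hlt.trans ?_
    rw [tourWeight, hσ]
    exact weight_lt hR (by omega) _ (valid_st h3N ε hε)
  obtain ⟨s, hs, hτs⟩ := exists_states hR (by omega) τ hτ hw
  obtain ⟨ε', hε', rfl⟩ := exists_digits s hs
  rw [hσ, hτs] at hcard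
  exact ⟨_, phi_step hR k hN ε ε' hε hε' hcard, ε', hε', hτs, rfl⟩

theorem inv_opt [NeZero N] (hR : 1 ≤ R) (k : ℕ) (hk : 3 ≤ k) (hN : 3 ≤ N)
    (σ : Equiv.Perm (Vert R N)) (p : ℕ) (hI : CounterInv R N σ p)
    (h : IsLocalOpt (instW R N) k σ) : 2 ^ R ≤ p := by
  obtain ⟨ε, hε, hσ, rfl⟩ := hI
  by_cases hc : ∃ i, i < R ∧ ε i ≠ 2
  · exfalso
    obtain ⟨τ, ⟨h1, h2⟩, h3⟩ := exists_improving hR hN k hk ε hε hc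
    refine h τ ⟨⟨h1, ?_⟩, ?_⟩
    · rw [hσ]; exact h2
    · rw [tourWeight, tourWeight, hσ]; exact h3
  · push Not at hc
    have h1 := phi_full ε hc R le_rfl
    have h2 : 2 ^ 1 ≤ 2 ^ R := Nat.pow_le_pow_right (by norm_num) hR
    rw [pow_succ] at h1
    omega

end Layered

/-- TSP/k-Opt has the all-exp property for every k ≥ 9. -/
theorem tsp_kopt_all_exp_of_nine_le (k : ℕ) (hk : 9 ≤ k) : TSPKOptAllExp k := by
  obtain ⟨N, hNdef⟩ : ∃ N, N = 2 ^ (k + 2) := ⟨_, rfl⟩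
  have hN3 : 3 ≤ N := by
    have : 2 ^ 2 ≤ 2 ^ (k + 2) := Nat.pow_le_pow_right (by norm_num) (by omega)
    omega
  have : NeZero N := ⟨by omega⟩
  have h8 : 8 * N ≠ 0 := by omega
  refine ⟨(2 : ℝ) ^ (((8 * N : ℕ) : ℝ)⁻¹),
    Real.one_lt_rpow (by norm_num) (by positivity), fun N₀ => ?_⟩
  obtain ⟨q, hq⟩ : ∃ q, q = N₀ + k + 1 := ⟨_, rfl⟩
  obtain ⟨R, hRq⟩ : ∃ R, R + 1 = 4 * q := ⟨4 * q - 1, by omega⟩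
  have hR : 1 ≤ R := by omega
  have hcard : Fintype.card (Vert R N) = 8 * N * q := by
    rw [Fintype.card_sum, Fintype.card_prod, Fintype.card_fin, ZMod.card, hRq]
    ring
  let e : Vert R N ≃ Fin (8 * N * q) := Fintype.equivFinOfCardEq hcard
  refine ⟨8 * N * q, by nlinarith, fun x => instW R N (Sym2.map e.symm x),
    e.permCongr (tourOf (muOf (st R N fun _ => 0))), fun x => instW_nonneg _,
    isTour_permCongr e _ (isTour_tourOf _), fun l hl => ?_⟩
  have hback : ∀ σ : Equiv.Perm (Vert R N), e.symm.permCongr (e.permCongr σ) = σ := by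
    intro σ
    ext v
    simp [Equiv.permCongr_apply]
  have hback' : ∀ σ : Equiv.Perm (Fin (8 * N * q)), e.permCongr (e.symm.permCongr σ) = σ := by
    intro σ
    ext v
    simp [Equiv.permCongr_apply]
  have hphi0 : ∀ i, phi (fun _ => 0) i = 0 := by
    intro i
    induction i with
    | zero => rfl
    | succ i ih => simp [phi, ih]
  have hmain := length_bound (fun x => instW R N (Sym2.map e.symm x)) k (2 ^ (k + 1)) (2 ^ R)
    (fun σ p => CounterInv R N (e.symm.permCongr σ) p)
    (fun σ τ p hI h => inv_step hR k hNdef.ge _ _ p hI (improving_permCongr e.symm k σ τ _ h))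
    (fun σ p hI h => by
      refine inv_opt hR k (by omega) hN3 _ p hI fun τ hτ => h (e.permCongr τ) ?_
      have := improving_permCongr e k (e.symm.permCongr σ) τ
        (fun x => instW R N (Sym2.map e.symm x)) (by simpa [Sym2.map_map] using hτ)
      rwa [hback'] at this)
    l _ 0 ⟨fun _ => 0, by simp, by rw [hback], hphi0 R⟩ hl
  rw [zero_add] at hmain
  have h1 : 2 ^ R = 2 ^ (R - (k + 1)) * 2 ^ (k + 1) := by
    rw [← pow_add]; congr 1; omega
  rw [h1] at hmain
  have h2 : 2 ^ (R - (k + 1)) ≤ l.length := Nat.le_of_mul_le_mul_right hmain (by positivity)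
  have h3 : 2 ^ q ≤ 2 ^ (R - (k + 1)) := Nat.pow_le_pow_right (by norm_num) (by omega)
  rw [pow_mul, Real.rpow_inv_natCast_pow (by norm_num) h8]
  exact_mod_cast h3.trans h2
end

section
/- There exists a (4,2)-simple gadget; that is, a parity gadget satisfying the (4,2) swap-count conditions whose only possible subtours, in any graph into which it is embedded via one external edge at each of X, X', Y, Y', Z, Z', are the four subtours (1)–(4), independent of the rest of the graph. -/
open SimpleGraph

/-- The number of edges of the edge set `F` incident to the vertex `v`
(the degree of `v` in the graph with edge set `F`). -/
noncomputable def edgeDeg {V : Type*} (F : Set (Sym2 V)) (v : V) : ℕ :=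
  {u | s(v, u) ∈ F}.ncard

/-- `v` is an endpoint of a path of the path system `F` (degree at most one). -/
def IsEndpoint {V : Type*} (F : Set (Sym2 V)) (v : V) : Prop :=
  edgeDeg F v ≤ 1

/-- The path cover `F` contains an `{a, b}`-path: `a` and `b` are endpoints of one and
the same path of `F`. -/
def HasPath {V : Type*} (F : Set (Sym2 V)) (a b : V) : Prop :=
  IsEndpoint F a ∧ IsEndpoint F b ∧ (SimpleGraph.fromEdgeSet F).Reachable a b

/-- The data of a (candidate) parity gadget: a graph with six distinguished vertices
`X, X', Y, Y', Z, Z'` and a distinguished partition of (some of) its edges into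
same-set edges and different-set edges (all remaining edges having weight zero). -/
structure GadgetData (V : Type*) where
  G : SimpleGraph V
  X : V
  X' : V
  Y : V
  Y' : V
  Z : V
  Z' : V
  sameSet : Set (Sym2 V)
  diffSet : Set (Sym2 V)

namespace GadgetData

variable {V : Type*} (g : GadgetData V)

/-- The six distinguished vertices. -/
def terminals : Set V := {g.X, g.X', g.Y, g.Y', g.Z, g.Z'}

/-- `F` is a cover of the vertices of the gadget by vertex-disjoint paths whose
endpoints lie in the set of distinguished vertices: an acyclic set of gadget edges of
maximum degree two in which every vertex of degree less than two is distinguished. -/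
def IsPathCover (F : Set (Sym2 V)) : Prop :=
  F ⊆ g.G.edgeSet ∧ (SimpleGraph.fromEdgeSet F).IsAcyclic ∧
    (∀ v, edgeDeg F v ≤ 2) ∧ (∀ v, edgeDeg F v ≤ 1 → v ∈ g.terminals)

/-- A subtour of the gadget: a path cover in which `Z` and `Z'` are path endpoints. -/
def Subtour (F : Set (Sym2 V)) : Prop :=
  g.IsPathCover F ∧ IsEndpoint F g.Z ∧ IsEndpoint F g.Z'

/-- Subtour (1): a single `{Z, Z'}`-path (the remaining distinguished vertices are
interior). -/
def Sub1 (F : Set (Sym2 V)) : Prop :=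
  g.Subtour F ∧ HasPath F g.Z g.Z' ∧
    edgeDeg F g.X = 2 ∧ edgeDeg F g.X' = 2 ∧ edgeDeg F g.Y = 2 ∧ edgeDeg F g.Y' = 2

/-- Subtour (2): an `{X, X'}`-path and a `{Z, Z'}`-path. -/
def Sub2 (F : Set (Sym2 V)) : Prop :=
  g.Subtour F ∧ HasPath F g.Z g.Z' ∧ HasPath F g.X g.X' ∧
    edgeDeg F g.Y = 2 ∧ edgeDeg F g.Y' = 2

/-- Subtour (3): a `{Y, Y'}`-path and a `{Z, Z'}`-path. -/
def Sub3 (F : Set (Sym2 V)) : Prop :=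
  g.Subtour F ∧ HasPath F g.Z g.Z' ∧ HasPath F g.Y g.Y' ∧
    edgeDeg F g.X = 2 ∧ edgeDeg F g.X' = 2

/-- Subtour (4): an `{X, X'}`-path, a `{Y, Y'}`-path and a `{Z, Z'}`-path. -/
def Sub4 (F : Set (Sym2 V)) : Prop :=
  g.Subtour F ∧ HasPath F g.Z g.Z' ∧ HasPath F g.X g.X' ∧ HasPath F g.Y g.Y'

/-- `g` is a parity gadget. -/
structure IsParityGadget : Prop where
  nodup : List.Nodup [g.X, g.X', g.Y, g.Y', g.Z, g.Z']
  same_sub : g.sameSet ⊆ g.G.edgeSet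
  diff_sub : g.diffSet ⊆ g.G.edgeSet
  disj : Disjoint g.sameSet g.diffSet
  ex1 : ∃! F, g.Sub1 F
  ex2 : ∃! F, g.Sub2 F
  ex3 : ∃! F, g.Sub3 F
  ex4 : ∃! F, g.Sub4 F
  xpair : ∀ F, g.Subtour F → IsEndpoint F g.X → IsEndpoint F g.X' →
    HasPath F g.X g.X'
  ypair : ∀ F, g.Subtour F → IsEndpoint F g.Y → IsEndpoint F g.Y' →
    HasPath F g.Y g.Y'
  w1 : ∀ F, g.Sub1 F → (F ∩ g.sameSet).ncard = 1 ∧ F ∩ g.diffSet = ∅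
  w4 : ∀ F, g.Sub4 F → (F ∩ g.sameSet).ncard = 1 ∧ F ∩ g.diffSet = ∅
  w2 : ∀ F, g.Sub2 F → (F ∩ g.diffSet).ncard = 1 ∧ F ∩ g.sameSet = ∅
  w3 : ∀ F, g.Sub3 F → (F ∩ g.diffSet).ncard = 1 ∧ F ∩ g.sameSet = ∅

/-- The `(r_x, r_y)` swap-count conditions of an `(r_x, r_y)`-parity gadget. -/
def SwapCounts (rx ry : ℕ) : Prop :=
  (∀ F F', g.Sub1 F → g.Sub2 F' → (F \ F').ncard = rx ∧ (F' \ F).ncard = rx - 1) ∧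
  (∀ F F', g.Sub3 F → g.Sub4 F' → (F \ F').ncard = rx ∧ (F' \ F).ncard = rx - 1) ∧
  (∀ F F', g.Sub1 F → g.Sub3 F' → (F \ F').ncard = ry ∧ (F' \ F).ncard = ry - 1) ∧
  (∀ F F', g.Sub2 F → g.Sub4 F' → (F \ F').ncard = ry ∧ (F' \ F).ncard = ry - 1) ∧
  (∀ F F', g.Sub1 F → g.Sub4 F' →
    max rx ry ≤ (F \ F').ncard ∧ max rx ry - 1 ≤ (F' \ F).ncard) ∧
  (∀ F F', g.Sub2 F → g.Sub3 F' →
    max rx ry ≤ (F \ F').ncard ∧ max rx ry - 1 ≤ (F' \ F).ncard)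

/-- `g` is a simple gadget: independent of the surrounding graph, its only possible
subtours are the four subtours (1)–(4). -/
def IsSimple : Prop :=
  ∀ F, g.Subtour F → g.Sub1 F ∨ g.Sub2 F ∨ g.Sub3 F ∨ g.Sub4 F

end GadgetData


namespace Gad42

/-- Edges common to all four subtours. -/
def C : Finset (Sym2 (Fin 18)) :=
  {s(0,12), s(12,5), s(1,13), s(13,6), s(2,14), s(14,7), s(3,15), s(15,8),
   s(4,16), s(16,10), s(9,17), s(17,11)}

/-- The remaining edges of the gadget. -/
def W : Finset (Sym2 (Fin 18)) :=
  {s(0,1), s(1,2), s(2,3), s(3,4), s(4,5), s(5,6), s(6,7), s(8,9), s(2,9), s(4,9)}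

def E : Finset (Sym2 (Fin 18)) := C ∪ W

def S1 : Finset (Sym2 (Fin 18)) := C ∪ {s(0,1), s(2,3), s(4,5), s(6,7), s(8,9)}
def S2 : Finset (Sym2 (Fin 18)) := C ∪ {s(1,2), s(3,4), s(5,6), s(8,9)}
def S3 : Finset (Sym2 (Fin 18)) := C ∪ {s(0,1), s(2,9), s(4,5), s(6,7)}
def S4 : Finset (Sym2 (Fin 18)) := C ∪ {s(1,2), s(4,9), s(5,6)}

def same : Finset (Sym2 (Fin 18)) := {s(2,3), s(4,9)}
def diff : Finset (Sym2 (Fin 18)) := {s(3,4), s(2,9)}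

def gd : GadgetData (Fin 18) where
  G := SimpleGraph.fromEdgeSet (E : Set (Sym2 (Fin 18)))
  X := 0
  X' := 7
  Y := 3
  Y' := 8
  Z := 10
  Z' := 11
  sameSet := same
  diffSet := diff

theorem edgeSet_eq : gd.G.edgeSet = (E : Set (Sym2 (Fin 18))) := by
  have h : ∀ e ∈ E, ¬ e.IsDiag := by decide +kernel
  show (SimpleGraph.fromEdgeSet (E : Set (Sym2 (Fin 18)))).edgeSet = _
  rw [SimpleGraph.edgeSet_fromEdgeSet]
  ext e
  constructor
  · intro he; exact he.1
  · intro he; exact ⟨he, h e he⟩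

theorem deg_coe (S : Finset (Sym2 (Fin 18))) (v : Fin 18) :
    edgeDeg (S : Set (Sym2 (Fin 18))) v = (S.filter (v ∈ ·)).card := by
  classical
  unfold edgeDeg
  rw [← Set.ncard_image_of_injective (f := fun u => s(v, u))]
  · rw [← Set.ncard_coe_finset]
    congr 1
    ext e
    simp only [Set.mem_image, Set.mem_ofPred_eq, Finset.mem_coe, Finset.mem_filter]
    constructor
    · rintro ⟨u, hu, rfl⟩
      exact ⟨hu, Sym2.mem_mk_left _ _⟩
    · rintro ⟨he, u, rfl⟩
      exact ⟨u, he, rfl⟩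
  · intro a b h
    exact Sym2.congr_right.mp h

theorem acyclic_of_pos (S : Finset (Sym2 (Fin 18))) (pos : Fin 18 → ℕ)
    (inj : Function.Injective pos)
    (h : ∀ u v, s(u, v) ∈ S → pos u = pos v + 1 ∨ pos v = pos u + 1) :
    (SimpleGraph.fromEdgeSet (S : Set (Sym2 (Fin 18)))).IsAcyclic := by
  have key : ∀ u v, pos v = pos u + 1 → ∀ w,
      ((SimpleGraph.fromEdgeSet (S : Set (Sym2 (Fin 18)))).deleteEdges {s(u,v)}).Reachable u w →
      pos w ≤ pos u := by
    intro u v huv w ⟨p⟩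
    have gen : ∀ a b : Fin 18,
        ∀ p : ((SimpleGraph.fromEdgeSet (S : Set (Sym2 (Fin 18)))).deleteEdges {s(u,v)}).Walk a b,
        pos a ≤ pos u → pos b ≤ pos u := by
      intro a b p
      induction p with
      | nil => exact id
      | @cons a c d hac q ih =>
        intro ha
        apply ih
        rw [SimpleGraph.deleteEdges_adj, SimpleGraph.fromEdgeSet_adj] at hac
        obtain ⟨⟨h1, h2⟩, h3⟩ := hac
        by_contra hc
        rcases h a c h1 with h4 | h4
        · omega
        · have e1 : a = u := inj (by omega)
          have e2 : c = v := inj (by omega)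
          subst e1 e2
          exact h3 rfl
    exact gen u w p le_rfl
  rw [SimpleGraph.isAcyclic_iff_forall_adj_isBridge]
  intro u v huv
  have h1 : s(u, v) ∈ S := ((SimpleGraph.fromEdgeSet_adj _).mp huv).1
  rcases h u v h1 with h4 | h4
  · rw [Sym2.eq_swap, SimpleGraph.isBridge_iff]
    intro hr
    have := key v u h4 u hr
    omega
  · rw [SimpleGraph.isBridge_iff]
    intro hr
    have := key u v h4 v hr
    omega

theorem reach_of_chain (F : Set (Sym2 (Fin 18))) (a : Fin 18) (l : List (Fin 18))
    (b : Fin 18)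
    (h : List.IsChain (fun u v => s(u, v) ∈ F ∧ u ≠ v) (a :: l))
    (hb : (a :: l).getLast (by simp) = b) :
    (SimpleGraph.fromEdgeSet F).Reachable a b := by
  induction l generalizing a with
  | nil => simp at hb; subst hb; exact SimpleGraph.Reachable.refl _
  | cons c l ih =>
    rw [List.isChain_cons_cons] at h
    have h1 : (SimpleGraph.fromEdgeSet F).Adj a c :=
      (SimpleGraph.fromEdgeSet_adj _).mpr h.1
    exact h1.reachable.trans (ih c h.2 (by simpa using hb))

def posOf (l : List (Fin 18)) (v : Fin 18) : ℕ := l.idxOf v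

def L1 : List (Fin 18) := [10,16,4,5,12,0,1,13,6,7,14,2,3,15,8,9,17,11]
def L2 : List (Fin 18) := [10,16,4,3,15,8,9,17,11,0,12,5,6,13,1,2,14,7]
def L3 : List (Fin 18) := [10,16,4,5,12,0,1,13,6,7,14,2,9,17,11,3,15,8]
def L4 : List (Fin 18) := [10,16,4,9,17,11,0,12,5,6,13,1,2,14,7,3,15,8]

theorem cover_of (S : Finset (Sym2 (Fin 18))) (L : List (Fin 18)) (hE : S ⊆ E)
    (inj : ∀ a b, posOf L a = posOf L b → a = b)
    (hp : ∀ u v, s(u, v) ∈ S → posOf L u = posOf L v + 1 ∨ posOf L v = posOf L u + 1)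
    (hd : ∀ v, (S.filter (v ∈ ·)).card ≤ 2 ∧
      ((S.filter (v ∈ ·)).card ≤ 1 → v = 0 ∨ v = 7 ∨ v = 3 ∨ v = 8 ∨ v = 10 ∨ v = 11))
    (hz : (S.filter ((10 : Fin 18) ∈ ·)).card ≤ 1)
    (hz' : (S.filter ((11 : Fin 18) ∈ ·)).card ≤ 1) :
    gd.Subtour (S : Set (Sym2 (Fin 18))) := by
  refine ⟨⟨?_, acyclic_of_pos S (posOf L) (fun a b => inj a b) hp, ?_, ?_⟩, ?_, ?_⟩
  · rw [edgeSet_eq]; exact_mod_cast hE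
  · intro v; rw [deg_coe]; exact (hd v).1
  · intro v; rw [deg_coe]; exact (hd v).2
  · unfold IsEndpoint; rw [deg_coe]; exact hz
  · unfold IsEndpoint; rw [deg_coe]; exact hz'

theorem sub_S1 : gd.Subtour (S1 : Set (Sym2 (Fin 18))) := by
  apply cover_of S1 L1 <;> decide +kernel
theorem sub_S2 : gd.Subtour (S2 : Set (Sym2 (Fin 18))) := by
  apply cover_of S2 L2 <;> decide +kernel
theorem sub_S3 : gd.Subtour (S3 : Set (Sym2 (Fin 18))) := by
  apply cover_of S3 L3 <;> decide +kernel
theorem sub_S4 : gd.Subtour (S4 : Set (Sym2 (Fin 18))) := by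
  apply cover_of S4 L4 <;> decide +kernel

theorem path_of (S : Finset (Sym2 (Fin 18))) (a b : Fin 18) (l : List (Fin 18))
    (ha : (S.filter (a ∈ ·)).card ≤ 1) (hb : (S.filter (b ∈ ·)).card ≤ 1)
    (h : List.IsChain (fun u v => s(u, v) ∈ S ∧ u ≠ v) (a :: l))
    (hl : (a :: l).getLast (by simp) = b) : HasPath (S : Set (Sym2 (Fin 18))) a b := by
  refine ⟨?_, ?_, reach_of_chain _ a l b (by exact_mod_cast h) hl⟩
  · unfold IsEndpoint; rw [deg_coe]; exact ha
  · unfold IsEndpoint; rw [deg_coe]; exact hb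

theorem is1 : gd.Sub1 (S1 : Set (Sym2 (Fin 18))) := by
  refine ⟨sub_S1, path_of S1 10 11 [16,4,5,12,0,1,13,6,7,14,2,3,15,8,9,17,11] ?_ ?_ ?_ ?_, ?_⟩
  any_goals decide +kernel
  simp only [deg_coe]
  decide +kernel

theorem is2 : gd.Sub2 (S2 : Set (Sym2 (Fin 18))) := by
  refine ⟨sub_S2, path_of S2 10 11 [16,4,3,15,8,9,17,11] ?_ ?_ ?_ ?_,
    path_of S2 0 7 [12,5,6,13,1,2,14,7] ?_ ?_ ?_ ?_, ?_⟩
  any_goals decide +kernel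
  simp only [deg_coe]
  decide +kernel

theorem is3 : gd.Sub3 (S3 : Set (Sym2 (Fin 18))) := by
  refine ⟨sub_S3, path_of S3 10 11 [16,4,5,12,0,1,13,6,7,14,2,9,17,11] ?_ ?_ ?_ ?_,
    path_of S3 3 8 [15,8] ?_ ?_ ?_ ?_, ?_⟩
  any_goals decide +kernel
  simp only [deg_coe]
  decide +kernel

theorem is4 : gd.Sub4 (S4 : Set (Sym2 (Fin 18))) := by
  refine ⟨sub_S4, path_of S4 10 11 [16,4,9,17,11] ?_ ?_ ?_ ?_,
    path_of S4 0 7 [12,5,6,13,1,2,14,7] ?_ ?_ ?_ ?_, path_of S4 3 8 [15,8] ?_ ?_ ?_ ?_⟩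
  all_goals decide +kernel

/-- A cycle inside `F` contradicts acyclicity. -/
theorem no_cycle (F : Set (Sym2 (Fin 18))) (hF : (SimpleGraph.fromEdgeSet F).IsAcyclic)
    (a b : Fin 18) (l : List (Fin 18)) (hab : s(a, b) ∈ F) (hne : a ≠ b)
    (h : List.IsChain (fun u v => s(u, v) ∈ F \ {s(a, b)} ∧ u ≠ v) (a :: l))
    (hl : (a :: l).getLast (by simp) = b) : False := by
  rw [SimpleGraph.isAcyclic_iff_forall_adj_isBridge] at hF
  have h1 := hF ((SimpleGraph.fromEdgeSet_adj _).mpr ⟨hab, hne⟩)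
  rw [SimpleGraph.isBridge_iff] at h1
  apply h1
  have h2 := reach_of_chain _ a l b h hl
  refine h2.mono ?_
  intro u v huv
  rw [SimpleGraph.fromEdgeSet_adj] at huv
  rw [SimpleGraph.deleteEdges_adj, SimpleGraph.fromEdgeSet_adj]
  exact ⟨⟨huv.1.1, huv.2⟩, huv.1.2⟩

theorem deg2 (S : Finset (Sym2 (Fin 18))) (hS : S ⊆ E) (v : Fin 18) (d e : Sym2 (Fin 18))
    (hv : E.filter (v ∈ ·) = {d, e}) (h : ¬ (S.filter (v ∈ ·)).card ≤ 1) :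
    d ∈ S ∧ e ∈ S := by
  have hsub : S.filter (v ∈ ·) ⊆ {d, e} := hv ▸ Finset.filter_subset_filter _ hS
  have : S.filter (v ∈ ·) = {d, e} :=
    Finset.eq_of_subset_of_card_le hsub (by have := Finset.card_le_two (a := d) (b := e); omega)
  have hd : d ∈ S.filter (v ∈ ·) := by rw [this]; simp
  have he : e ∈ S.filter (v ∈ ·) := by rw [this]; simp
  exact ⟨(Finset.mem_filter.mp hd).1, (Finset.mem_filter.mp he).1⟩

/-- Degree as a sum over the edges of the gadget at `v`. -/
theorem deg_sum (S : Finset (Sym2 (Fin 18))) (hS : S ⊆ E) (v : Fin 18)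
    (T : Finset (Sym2 (Fin 18))) (hv : E.filter (v ∈ ·) = T) :
    (S.filter (v ∈ ·)).card = ∑ e ∈ T, if e ∈ S then 1 else 0 := by
  rw [← Finset.card_filter, ← hv]
  congr 1
  ext e
  simp only [Finset.mem_filter]
  constructor
  · rintro ⟨h1, h2⟩; exact ⟨⟨hS h1, h2⟩, h1⟩
  · rintro ⟨⟨_, h2⟩, h1⟩; exact ⟨h1, h2⟩

theorem deg3 (S : Finset (Sym2 (Fin 18))) (hS : S ⊆ E) (v : Fin 18) (c d e : Sym2 (Fin 18))
    (hv : E.filter (v ∈ ·) = {c, d, e}) (hne : c ≠ d ∧ c ≠ e ∧ d ≠ e) :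
    (S.filter (v ∈ ·)).card =
      (if c ∈ S then 1 else 0) + (if d ∈ S then 1 else 0) + (if e ∈ S then 1 else 0) := by
  rw [deg_sum S hS v _ hv, Finset.sum_insert (by simp [hne]), Finset.sum_insert (by simp [hne]),
    Finset.sum_singleton]
  ring

theorem deg4 (S : Finset (Sym2 (Fin 18))) (hS : S ⊆ E) (v : Fin 18)
    (b c d e : Sym2 (Fin 18))
    (hv : E.filter (v ∈ ·) = {b, c, d, e})
    (hne : b ≠ c ∧ b ≠ d ∧ b ≠ e ∧ c ≠ d ∧ c ≠ e ∧ d ≠ e) :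
    (S.filter (v ∈ ·)).card = (if b ∈ S then 1 else 0) +
      (if c ∈ S then 1 else 0) + (if d ∈ S then 1 else 0) + (if e ∈ S then 1 else 0) := by
  rw [deg_sum S hS v _ hv, Finset.sum_insert (by simp [hne]), Finset.sum_insert (by simp [hne]),
    Finset.sum_insert (by simp [hne]), Finset.sum_singleton]
  ring

theorem eq_of_inter (S T : Finset (Sym2 (Fin 18))) (hS : S ⊆ E) (hC : C ⊆ S)
    (hW : S ∩ W = T) : S = C ∪ T := by
  ext e
  rw [← hW]
  simp only [Finset.mem_union, Finset.mem_inter]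
  constructor
  · intro h
    rcases Finset.mem_union.mp (hS h) with h' | h'
    · exact Or.inl h'
    · exact Or.inr ⟨h, h'⟩
  · rintro (h | h)
    · exact hC h
    · exact h.1

theorem comb (p0 p1 p2 p3 p4 p5 p6 p7 p8 p9 : Prop)
    [Decidable p0] [Decidable p1] [Decidable p2] [Decidable p3] [Decidable p4] [Decidable p5] [Decidable p6] [Decidable p7] [Decidable p8] [Decidable p9]
    (u1 : 1 + (if p0 then 1 else 0) + (if p1 then 1 else 0) ≤ 2)
    (u2 : 1 + (if p1 then 1 else 0) + (if p2 then 1 else 0) + (if p8 then 1 else 0) ≤ 2)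
    (u3 : 1 + (if p2 then 1 else 0) + (if p3 then 1 else 0) ≤ 2)
    (u4 : 1 + (if p3 then 1 else 0) + (if p4 then 1 else 0) + (if p9 then 1 else 0) ≤ 2)
    (u5 : 1 + (if p4 then 1 else 0) + (if p5 then 1 else 0) ≤ 2)
    (u6 : 1 + (if p5 then 1 else 0) + (if p6 then 1 else 0) ≤ 2)
    (u9 : 1 + (if p7 then 1 else 0) + (if p8 then 1 else 0) + (if p9 then 1 else 0) ≤ 2)
    (l1 : ¬ 1 + (if p0 then 1 else 0) + (if p1 then 1 else 0) ≤ 1)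
    (l2 : ¬ 1 + (if p1 then 1 else 0) + (if p2 then 1 else 0) + (if p8 then 1 else 0) ≤ 1)
    (l4 : ¬ 1 + (if p3 then 1 else 0) + (if p4 then 1 else 0) + (if p9 then 1 else 0) ≤ 1)
    (l5 : ¬ 1 + (if p4 then 1 else 0) + (if p5 then 1 else 0) ≤ 1)
    (l6 : ¬ 1 + (if p5 then 1 else 0) + (if p6 then 1 else 0) ≤ 1)
    (l9 : ¬ 1 + (if p7 then 1 else 0) + (if p8 then 1 else 0) + (if p9 then 1 else 0) ≤ 1)
    (n1 : ¬ (p0 ∧ p5)) (n2 : ¬ (p1 ∧ p6)) :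
    (p0 ∧ ¬ p1 ∧ p2 ∧ ¬ p3 ∧ p4 ∧ ¬ p5 ∧ p6 ∧ p7 ∧ ¬ p8 ∧ ¬ p9) ∨
    (¬ p0 ∧ p1 ∧ ¬ p2 ∧ p3 ∧ ¬ p4 ∧ p5 ∧ ¬ p6 ∧ p7 ∧ ¬ p8 ∧ ¬ p9) ∨
    (p0 ∧ ¬ p1 ∧ ¬ p2 ∧ ¬ p3 ∧ p4 ∧ ¬ p5 ∧ p6 ∧ ¬ p7 ∧ p8 ∧ ¬ p9) ∨
    (¬ p0 ∧ p1 ∧ ¬ p2 ∧ ¬ p3 ∧ ¬ p4 ∧ p5 ∧ ¬ p6 ∧ ¬ p7 ∧ ¬ p8 ∧ p9) := by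
  by_cases h0 : p0
  · have h5 : ¬ p5 := fun h => n1 ⟨h0, h⟩
    have h1 : ¬ p1 := by intro h; simp [h0, h] at u1
    have h4 : p4 := by by_contra h; simp [h, h5] at l5
    have h6 : p6 := by by_contra h; simp [h, h5] at l6
    have h3 : ¬ p3 := by intro h; simp [h, h4] at u4; try omega
    have h9 : ¬ p9 := by intro h; simp [h, h4] at u4; try omega
    by_cases h8 : p8
    · have h2 : ¬ p2 := by intro h; simp [h, h8] at u2; try omega
      have h7 : ¬ p7 := by intro h; simp [h, h8] at u9; try omega
      exact Or.inr (Or.inr (Or.inl ⟨h0, h1, h2, h3, h4, h5, h6, h7, h8, h9⟩))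
    · have h2 : p2 := by by_contra h; simp [h, h8, h1] at l2
      have h7 : p7 := by by_contra h; simp [h, h8, h9] at l9
      exact Or.inl ⟨h0, h1, h2, h3, h4, h5, h6, h7, h8, h9⟩
  · have h1 : p1 := by by_contra h; simp [h0, h] at l1
    have h6 : ¬ p6 := fun h => n2 ⟨h1, h⟩
    have h5 : p5 := by by_contra h; simp [h, h6] at l6
    have h4 : ¬ p4 := by intro h; simp [h, h5] at u5
    have h2 : ¬ p2 := by intro h; simp [h, h1] at u2; try omega
    have h8 : ¬ p8 := by intro h; simp [h, h1] at u2; try omega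
    by_cases h9 : p9
    · have h3 : ¬ p3 := by intro h; simp [h, h9] at u4; try omega
      have h7 : ¬ p7 := by intro h; simp [h, h9] at u9; try omega
      exact Or.inr (Or.inr (Or.inr ⟨h0, h1, h2, h3, h4, h5, h6, h7, h8, h9⟩))
    · have h3 : p3 := by by_contra h; simp [h, h4, h9] at l4
      have h7 : p7 := by by_contra h; simp [h, h8, h9] at l9
      exact Or.inr (Or.inl ⟨h0, h1, h2, h3, h4, h5, h6, h7, h8, h9⟩)

set_option maxHeartbeats 4000000 in
theorem classify (F : Set (Sym2 (Fin 18))) (hF : gd.Subtour F) :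
    F = S1 ∨ F = S2 ∨ F = S3 ∨ F = S4 := by
  classical
  obtain ⟨⟨hE, hac, hd2, hd1⟩, hz, hz'⟩ := hF
  rw [edgeSet_eq] at hE
  obtain ⟨S, rfl⟩ : ∃ S : Finset (Sym2 (Fin 18)), F = S :=
    ⟨(Set.toFinite F).toFinset, by simp⟩
  have hS : S ⊆ E := by exact_mod_cast hE
  simp only [deg_coe] at hd2 hd1
  have nt : ∀ v : Fin 18, v ≠ 0 ∧ v ≠ 7 ∧ v ≠ 3 ∧ v ≠ 8 ∧ v ≠ 10 ∧ v ≠ 11 →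
      ¬ (S.filter (v ∈ ·)).card ≤ 1 := by
    intro v hv h
    have := hd1 v h
    simp only [GadgetData.terminals, gd, Set.mem_insert_iff, Set.mem_singleton_iff] at this
    tauto
  obtain ⟨c1, c2⟩ := deg2 S hS 12 s(0,12) s(12,5) (by decide +kernel) (nt 12 (by decide))
  obtain ⟨c3, c4⟩ := deg2 S hS 13 s(1,13) s(13,6) (by decide +kernel) (nt 13 (by decide))
  obtain ⟨c5, c6⟩ := deg2 S hS 14 s(2,14) s(14,7) (by decide +kernel) (nt 14 (by decide))
  obtain ⟨c7, c8⟩ := deg2 S hS 15 s(3,15) s(15,8) (by decide +kernel) (nt 15 (by decide))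
  obtain ⟨c9, c10⟩ := deg2 S hS 16 s(4,16) s(16,10) (by decide +kernel) (nt 16 (by decide))
  obtain ⟨c11, c12⟩ := deg2 S hS 17 s(9,17) s(17,11) (by decide +kernel) (nt 17 (by decide))
  have hC : C ⊆ S := by
    intro e he
    simp only [C, Finset.mem_insert, Finset.mem_singleton] at he
    rcases he with rfl | rfl | rfl | rfl | rfl | rfl | rfl | rfl | rfl | rfl | rfl | rfl <;>
      assumption
  have d1 := deg3 S hS 1 s(1,13) s(0,1) s(1,2) (by decide +kernel) (by decide +kernel)
  have d5 := deg3 S hS 5 s(12,5) s(4,5) s(5,6) (by decide +kernel) (by decide +kernel)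
  have d6 := deg3 S hS 6 s(13,6) s(5,6) s(6,7) (by decide +kernel) (by decide +kernel)
  have d3 := deg3 S hS 3 s(3,15) s(2,3) s(3,4) (by decide +kernel) (by decide +kernel)
  have d2 := deg4 S hS 2 s(2,14) s(1,2) s(2,3) s(2,9) (by decide +kernel) (by decide +kernel)
  have d4 := deg4 S hS 4 s(4,16) s(3,4) s(4,5) s(4,9) (by decide +kernel) (by decide +kernel)
  have d9 := deg4 S hS 9 s(9,17) s(8,9) s(2,9) s(4,9) (by decide +kernel) (by decide +kernel)
  have u1 := hd2 1
  have u2 := hd2 2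
  have u3 := hd2 3
  have u4 := hd2 4
  have u5 := hd2 5
  have u6 := hd2 6
  have u9 := hd2 9
  have l1 := nt 1 (by decide)
  have l2 := nt 2 (by decide)
  have l4 := nt 4 (by decide)
  have l5 := nt 5 (by decide)
  have l6 := nt 6 (by decide)
  have l9 := nt 9 (by decide)
  rw [d1] at u1 l1
  rw [d2] at u2 l2
  rw [d3] at u3
  rw [d4] at u4 l4
  rw [d5] at u5 l5
  rw [d6] at u6 l6
  rw [d9] at u9 l9
  clear d1 d2 d3 d4 d5 d6 d9 hd1 hd2 nt hz hz'
  simp only [c3, c2, c4, c7, c5, c9, c11, if_true] at u1 u2 u3 u4 u5 u6 u9 l1 l2 l4 l5 l6 l9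
  -- cycle exclusions
  have n1 : ¬ (s(0,1) ∈ S ∧ s(5,6) ∈ S) := by
    rintro ⟨h1, h2⟩
    refine no_cycle _ hac 0 1 [12,5,6,13,1] h1 (by decide) ?_ rfl
    have c4' : s(6,13) ∈ S := by rw [Sym2.eq_swap]; exact c4
    have c3' : s(13,1) ∈ S := by rw [Sym2.eq_swap]; exact c3
    simp [c1, c2, c3', c4', h2]
  have n2 : ¬ (s(1,2) ∈ S ∧ s(6,7) ∈ S) := by
    rintro ⟨h1, h2⟩
    refine no_cycle _ hac 1 2 [13,6,7,14,2] h1 (by decide) ?_ rfl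
    have c6' : s(7,14) ∈ S := by rw [Sym2.eq_swap]; exact c6
    have c5' : s(14,2) ∈ S := by rw [Sym2.eq_swap]; exact c5
    simp [c3, c4, c5', c6', h2]
  have fin : ∀ T : Finset (Sym2 (Fin 18)), T ⊆ W → (∀ e ∈ W, e ∈ S ↔ e ∈ T) → S = C ∪ T := by
    intro T hT h
    refine eq_of_inter S T hS hC ?_
    ext e
    rw [Finset.mem_inter]
    exact ⟨fun he => (h e he.2).mp he.1, fun he => ⟨(h e (hT he)).mpr he, hT he⟩⟩
  have memW : ∀ p : Sym2 (Fin 18) → Prop, (p s(0,1) ∧ p s(1,2) ∧ p s(2,3) ∧ p s(3,4) ∧ p s(4,5) ∧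
      p s(5,6) ∧ p s(6,7) ∧ p s(8,9) ∧ p s(2,9) ∧ p s(4,9)) → ∀ e ∈ W, p e := by
    intro p hp e he
    simp only [W, Finset.mem_insert, Finset.mem_singleton] at he
    rcases he with rfl | rfl | rfl | rfl | rfl | rfl | rfl | rfl | rfl | rfl <;> tauto
  have cases4 :
      (s(0,1) ∈ S ∧ s(1,2) ∉ S ∧ s(2,3) ∈ S ∧ s(3,4) ∉ S ∧ s(4,5) ∈ S ∧ s(5,6) ∉ S ∧
        s(6,7) ∈ S ∧ s(8,9) ∈ S ∧ s(2,9) ∉ S ∧ s(4,9) ∉ S) ∨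
      (s(0,1) ∉ S ∧ s(1,2) ∈ S ∧ s(2,3) ∉ S ∧ s(3,4) ∈ S ∧ s(4,5) ∉ S ∧ s(5,6) ∈ S ∧
        s(6,7) ∉ S ∧ s(8,9) ∈ S ∧ s(2,9) ∉ S ∧ s(4,9) ∉ S) ∨
      (s(0,1) ∈ S ∧ s(1,2) ∉ S ∧ s(2,3) ∉ S ∧ s(3,4) ∉ S ∧ s(4,5) ∈ S ∧ s(5,6) ∉ S ∧
        s(6,7) ∈ S ∧ s(8,9) ∉ S ∧ s(2,9) ∈ S ∧ s(4,9) ∉ S) ∨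
      (s(0,1) ∉ S ∧ s(1,2) ∈ S ∧ s(2,3) ∉ S ∧ s(3,4) ∉ S ∧ s(4,5) ∉ S ∧ s(5,6) ∈ S ∧
        s(6,7) ∉ S ∧ s(8,9) ∉ S ∧ s(2,9) ∉ S ∧ s(4,9) ∈ S) := by
    clear memW fin hC hS hac hE c1 c2 c3 c4 c5 c6 c7 c8 c9 c10 c11 c12
    exact comb _ _ _ _ _ _ _ _ _ _ u1 u2 u3 u4 u5 u6 u9 l1 l2 l4 l5 l6 l9 n1 n2
  rcases cases4 with h | h | h | h
  · left
    rw [fin {s(0,1), s(2,3), s(4,5), s(6,7), s(8,9)} (by decide +kernel)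
      (memW _ (by simp [h]))]
    rfl
  · right; left
    rw [fin {s(1,2), s(3,4), s(5,6), s(8,9)} (by decide +kernel) (memW _ (by simp [h]))]
    rfl
  · right; right; left
    rw [fin {s(0,1), s(2,9), s(4,5), s(6,7)} (by decide +kernel) (memW _ (by simp [h]))]
    rfl
  · right; right; right
    rw [fin {s(1,2), s(4,9), s(5,6)} (by decide +kernel) (memW _ (by simp [h]))]
    rfl

theorem dX : edgeDeg (S1 : Set (Sym2 (Fin 18))) 0 = 2 ∧ edgeDeg (S2 : Set (Sym2 (Fin 18))) 0 = 1 ∧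
    edgeDeg (S3 : Set (Sym2 (Fin 18))) 0 = 2 ∧ edgeDeg (S4 : Set (Sym2 (Fin 18))) 0 = 1 := by
  simp only [deg_coe]
  decide +kernel

theorem dY : edgeDeg (S1 : Set (Sym2 (Fin 18))) 3 = 2 ∧ edgeDeg (S2 : Set (Sym2 (Fin 18))) 3 = 2 ∧
    edgeDeg (S3 : Set (Sym2 (Fin 18))) 3 = 1 ∧ edgeDeg (S4 : Set (Sym2 (Fin 18))) 3 = 1 := by
  simp only [deg_coe]
  decide +kernel

theorem iff1 (F : Set (Sym2 (Fin 18))) : gd.Sub1 F ↔ F = S1 := by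
  refine ⟨fun h => ?_, fun h => h ▸ is1⟩
  have hx : edgeDeg F 0 = 2 := h.2.2.1
  have hy : edgeDeg F 3 = 2 := h.2.2.2.2.1
  have := dX
  have := dY
  rcases classify F h.1 with rfl | rfl | rfl | rfl
  · rfl
  all_goals omega

theorem iff2 (F : Set (Sym2 (Fin 18))) : gd.Sub2 F ↔ F = S2 := by
  refine ⟨fun h => ?_, fun h => h ▸ is2⟩
  have hx : edgeDeg F 0 ≤ 1 := h.2.2.1.1
  have hy : edgeDeg F 3 = 2 := h.2.2.2.1
  have := dX
  have := dY
  rcases classify F h.1 with rfl | rfl | rfl | rfl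
  · omega
  · rfl
  all_goals omega

theorem iff3 (F : Set (Sym2 (Fin 18))) : gd.Sub3 F ↔ F = S3 := by
  refine ⟨fun h => ?_, fun h => h ▸ is3⟩
  have hy : edgeDeg F 3 ≤ 1 := h.2.2.1.1
  have hx : edgeDeg F 0 = 2 := h.2.2.2.1
  have := dX
  have := dY
  rcases classify F h.1 with rfl | rfl | rfl | rfl
  · omega
  · omega
  · rfl
  · omega

theorem iff4 (F : Set (Sym2 (Fin 18))) : gd.Sub4 F ↔ F = S4 := by
  refine ⟨fun h => ?_, fun h => h ▸ is4⟩
  have hx : edgeDeg F 0 ≤ 1 := h.2.2.1.1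
  have hy : edgeDeg F 3 ≤ 1 := h.2.2.2.1
  have := dX
  have := dY
  rcases classify F h.1 with rfl | rfl | rfl | rfl
  · omega
  · omega
  · omega
  · rfl

theorem simple : gd.IsSimple := by
  intro F hF
  rw [iff1, iff2, iff3, iff4]
  exact classify F hF

theorem weight (S a b : Finset (Sym2 (Fin 18))) (h : (S ∩ a).card = 1 ∧ S ∩ b = ∅) :
    ((S : Set (Sym2 (Fin 18))) ∩ a).ncard = 1 ∧ (S : Set (Sym2 (Fin 18))) ∩ b = ∅ := by
  rw [← Finset.coe_inter, ← Finset.coe_inter, Set.ncard_coe_finset, h.2]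
  exact ⟨h.1, Finset.coe_empty⟩

theorem parity : gd.IsParityGadget where
  nodup := by decide
  same_sub := by
    rw [edgeSet_eq]
    exact Finset.coe_subset.mpr (by decide +kernel : same ⊆ E)
  diff_sub := by
    rw [edgeSet_eq]
    exact Finset.coe_subset.mpr (by decide +kernel : diff ⊆ E)
  disj := Finset.disjoint_coe.mpr (by decide +kernel : Disjoint same diff)
  ex1 := ⟨S1, is1, fun F h => (iff1 F).mp h⟩
  ex2 := ⟨S2, is2, fun F h => (iff2 F).mp h⟩
  ex3 := ⟨S3, is3, fun F h => (iff3 F).mp h⟩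
  ex4 := ⟨S4, is4, fun F h => (iff4 F).mp h⟩
  xpair := by
    intro F hF hx _
    have hx : edgeDeg F 0 ≤ 1 := hx
    have := dX
    rcases classify F hF with rfl | rfl | rfl | rfl
    · omega
    · exact is2.2.2.1
    · omega
    · exact is4.2.2.1
  ypair := by
    intro F hF hy _
    have hy : edgeDeg F 3 ≤ 1 := hy
    have := dY
    rcases classify F hF with rfl | rfl | rfl | rfl
    · omega
    · omega
    · exact is3.2.2.1
    · exact is4.2.2.2
  w1 := by
    intro F h
    rw [(iff1 F).mp h]
    exact weight S1 same diff (by decide +kernel)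
  w4 := by
    intro F h
    rw [(iff4 F).mp h]
    exact weight S4 same diff (by decide +kernel)
  w2 := by
    intro F h
    rw [(iff2 F).mp h]
    exact weight S2 diff same (by decide +kernel)
  w3 := by
    intro F h
    rw [(iff3 F).mp h]
    exact weight S3 diff same (by decide +kernel)

theorem swaps : gd.SwapCounts 4 2 := by
  simp only [GadgetData.SwapCounts, iff1, iff2, iff3, iff4]
  refine ⟨?_, ?_, ?_, ?_, ?_, ?_⟩ <;>
  · rintro F F' rfl rfl
    rw [← Finset.coe_sdiff, ← Finset.coe_sdiff, Set.ncard_coe_finset, Set.ncard_coe_finset]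
    decide +kernel

end Gad42

theorem exists_simple_four_two_gadget :
    ∃ (V : Type) (_ : Fintype V) (_ : DecidableEq V) (g : GadgetData V),
      g.IsParityGadget ∧ g.SwapCounts 4 2 ∧ g.IsSimple :=
  ⟨Fin 18, inferInstance, inferInstance, Gad42.gd, Gad42.parity, Gad42.swaps, Gad42.simple⟩
end

section
/- The flexible gadget — the graph on the eight vertices X, X', Y, Y', Z, Z', R, S with the ten edges XR, RX', XZ, ZZ', Z'Y, YS, SY', Y'X', Y'Z, X'Z', where ZZ' and X'Y' are the same-set edges and Y'Z and X'Z' are the different-set edges — is a (2,2)-parity gadget. -/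
open SimpleGraph

/-!
Statement 11: the flexible gadget — the graph on the eight vertices
`X = 0, X' = 1, Y = 2, Y' = 3, Z = 4, Z' = 5, R = 6, S = 7` with the ten edges
`XR, RX', XZ, ZZ', Z'Y, YS, SY', Y'X', Y'Z, X'Z'`, same-set edges `ZZ'` and `X'Y'`,
different-set edges `Y'Z` and `X'Z'` — is a (2,2)-parity gadget.
-/

/-- The flexible gadget. -/
def flexibleGadget : GadgetData (Fin 8) where
  G := SimpleGraph.fromEdgeSet
    {s((0 : Fin 8), (6 : Fin 8)), s((6 : Fin 8), (1 : Fin 8)),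
     s((0 : Fin 8), (4 : Fin 8)), s((4 : Fin 8), (5 : Fin 8)),
     s((5 : Fin 8), (2 : Fin 8)), s((2 : Fin 8), (7 : Fin 8)),
     s((7 : Fin 8), (3 : Fin 8)), s((3 : Fin 8), (1 : Fin 8)),
     s((3 : Fin 8), (4 : Fin 8)), s((1 : Fin 8), (5 : Fin 8))}
  X := 0
  X' := 1
  Y := 2
  Y' := 3
  Z := 4
  Z' := 5
  sameSet := {s((4 : Fin 8), (5 : Fin 8)), s((1 : Fin 8), (3 : Fin 8))}
  diffSet := {s((3 : Fin 8), (4 : Fin 8)), s((1 : Fin 8), (5 : Fin 8))}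

/-- The degree of a vertex in a finite edge set, as a sum of indicators. -/
theorem edgeDeg_eq_sum (F : Set (Sym2 (Fin 8))) [DecidablePred (· ∈ F)] (v : Fin 8) :
    edgeDeg F v = ∑ u, if s(v, u) ∈ F then 1 else 0 := by
  rw [edgeDeg, Set.ncard_eq_toFinset_card', Finset.sum_boole]
  simp

/-- The same for finsets, in a computable form. -/
theorem edgeDeg_coe (T : Finset (Sym2 (Fin 8))) (v : Fin 8) :
    edgeDeg (T : Set (Sym2 (Fin 8))) v = (Finset.univ.filter fun u => s(v, u) ∈ T).card := by
  rw [edgeDeg, ← Set.ncard_coe_finset]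
  simp

/-- The ten edges. -/
def gadgetEdges : Finset (Sym2 (Fin 8)) :=
  {s(0, 6), s(6, 1), s(0, 4), s(4, 5), s(5, 2), s(2, 7), s(7, 3), s(3, 1), s(3, 4), s(1, 5)}

theorem flexible_edgeSet : flexibleGadget.G.edgeSet = (gadgetEdges : Set (Sym2 (Fin 8))) := by
  simp only [flexibleGadget, edgeSet_fromEdgeSet, gadgetEdges]
  ext e
  simp only [Set.mem_diff, Set.mem_insert_iff, Set.mem_singleton_iff, Finset.coe_insert,
    Finset.coe_singleton]
  constructor
  · exact fun h => h.1
  · intro h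
    refine ⟨h, ?_⟩
    rcases h with h | h | h | h | h | h | h | h | h | h <;> subst h <;> simp

/-- The edge set of subtour (1); those of subtours (2), (3) and (4) follow. -/
def tour1 : Finset (Sym2 (Fin 8)) :=
  {s(0, 6), s(6, 1), s(2, 7), s(7, 3), s(0, 4), s(5, 2), s(3, 1)}

def tour2 : Finset (Sym2 (Fin 8)) :=
  {s(0, 6), s(6, 1), s(2, 7), s(7, 3), s(5, 2), s(3, 4)}

def tour3 : Finset (Sym2 (Fin 8)) :=
  {s(0, 6), s(6, 1), s(2, 7), s(7, 3), s(0, 4), s(1, 5)}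

def tour4 : Finset (Sym2 (Fin 8)) :=
  {s(0, 6), s(6, 1), s(2, 7), s(7, 3), s(4, 5)}

theorem pathGraph_eight_acyclic : (pathGraph 8).IsAcyclic := by
  refine (isTree_iff_connected_and_card.2 ⟨pathGraph_connected 7, ?_⟩).isAcyclic
  have h : (pathGraph 8).edgeSet =
      ((Finset.univ.image fun i : Fin 7 => s(i.castSucc, i.succ) :
        Finset (Sym2 (Fin 8))) : Set (Sym2 (Fin 8))) := by
    ext e
    induction e with
    | h u v =>
      rw [mem_edgeSet, pathGraph_adj, Finset.mem_coe]
      revert u v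
      decide
  rw [Nat.card_coe_set_eq, h, Set.ncard_coe_finset]
  simp only [Nat.card_eq_fintype_card, Fintype.card_fin]
  decide

/-- A finite edge set whose edges join consecutive vertices of a linear order is acyclic. -/
theorem acyclic_of_order (T : Finset (Sym2 (Fin 8))) (f : Fin 8 → Fin 8)
    (hf : Function.Injective f)
    (h : ∀ u v, s(u, v) ∈ T → (f u).val + 1 = (f v).val ∨ (f v).val + 1 = (f u).val) :
    (fromEdgeSet (T : Set (Sym2 (Fin 8)))).IsAcyclic := by
  refine IsAcyclic.comap (G' := pathGraph 8) ⟨f, ?_⟩ hf pathGraph_eight_acyclic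
  intro u v huv
  rw [pathGraph_adj]
  exact h u v (by simpa using ((fromEdgeSet_adj _).1 huv).1)

theorem reach_edge {F : Set (Sym2 (Fin 8))} {u v : Fin 8} (h : s(u, v) ∈ F) (hne : u ≠ v) :
    (fromEdgeSet F).Reachable u v :=
  ((fromEdgeSet_adj _).2 ⟨h, hne⟩).reachable

/-- Sufficient decidable condition to be a subtour. -/
theorem subtour_of (T : Finset (Sym2 (Fin 8))) (f : Fin 8 → Fin 8)
    (hf : Function.Injective f) (hsub : T ⊆ gadgetEdges)
    (h : ∀ u v, s(u, v) ∈ T → (f u).val + 1 = (f v).val ∨ (f v).val + 1 = (f u).val)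
    (h2 : ∀ v, (Finset.univ.filter fun u => s(v, u) ∈ T).card ≤ 2)
    (h1 : ∀ v, (Finset.univ.filter fun u => s(v, u) ∈ T).card ≤ 1 →
      v = 0 ∨ v = 1 ∨ v = 2 ∨ v = 3 ∨ v = 4 ∨ v = 5)
    (h4 : (Finset.univ.filter fun u => s(4, u) ∈ T).card ≤ 1)
    (h5 : (Finset.univ.filter fun u => s(5, u) ∈ T).card ≤ 1) :
    flexibleGadget.Subtour (T : Set (Sym2 (Fin 8))) := by
  refine ⟨⟨?_, acyclic_of_order T f hf h, ?_, ?_⟩, ?_, ?_⟩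
  · rw [flexible_edgeSet]; exact_mod_cast hsub
  · intro v; rw [edgeDeg_coe]; exact h2 v
  · intro v; rw [edgeDeg_coe]; exact h1 v
  · rw [IsEndpoint, edgeDeg_coe]; exact h4
  · rw [IsEndpoint, edgeDeg_coe]; exact h5

theorem endpoint_of (T : Finset (Sym2 (Fin 8))) (v : Fin 8)
    (h : (Finset.univ.filter fun u => s(v, u) ∈ T).card ≤ 1) :
    IsEndpoint (T : Set (Sym2 (Fin 8))) v := by
  rw [IsEndpoint, edgeDeg_coe]; exact h

theorem deg_of (T : Finset (Sym2 (Fin 8))) (v : Fin 8)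
    (h : (Finset.univ.filter fun u => s(v, u) ∈ T).card = 2) :
    edgeDeg (T : Set (Sym2 (Fin 8))) v = 2 := by
  rw [edgeDeg_coe]; exact h

theorem reach_coe {T : Finset (Sym2 (Fin 8))} {u v : Fin 8} (h : s(u, v) ∈ T ∧ u ≠ v) :
    (fromEdgeSet (T : Set (Sym2 (Fin 8)))).Reachable u v :=
  reach_edge (by simpa using h.1) h.2

theorem subtour1 : flexibleGadget.Subtour (tour1 : Set (Sym2 (Fin 8))) :=
  subtour_of tour1 ![1, 3, 6, 4, 0, 7, 2, 5] (by decide) (by decide) (by decide) (by decide)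
    (by decide) (by decide) (by decide)

theorem subtour2 : flexibleGadget.Subtour (tour2 : Set (Sym2 (Fin 8))) :=
  subtour_of tour2 ![5, 7, 3, 1, 0, 4, 6, 2] (by decide) (by decide) (by decide) (by decide)
    (by decide) (by decide) (by decide)

theorem subtour3 : flexibleGadget.Subtour (tour3 : Set (Sym2 (Fin 8))) :=
  subtour_of tour3 ![1, 3, 5, 7, 0, 4, 2, 6] (by decide) (by decide) (by decide) (by decide)
    (by decide) (by decide) (by decide)

theorem subtour4 : flexibleGadget.Subtour (tour4 : Set (Sym2 (Fin 8))) :=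
  subtour_of tour4 ![2, 4, 5, 7, 0, 1, 3, 6] (by decide) (by decide) (by decide) (by decide)
    (by decide) (by decide) (by decide)

theorem sub1_tour1 : flexibleGadget.Sub1 (tour1 : Set (Sym2 (Fin 8))) := by
  refine ⟨subtour1, ⟨subtour1.2.1, subtour1.2.2, ?_⟩, deg_of tour1 0 (by decide),
    deg_of tour1 1 (by decide), deg_of tour1 2 (by decide), deg_of tour1 3 (by decide)⟩
  have a : s((4 : Fin 8), 0) ∈ tour1 ∧ (4 : Fin 8) ≠ 0 := by decide
  have b : s((0 : Fin 8), 6) ∈ tour1 ∧ (0 : Fin 8) ≠ 6 := by decide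
  have c : s((6 : Fin 8), 1) ∈ tour1 ∧ (6 : Fin 8) ≠ 1 := by decide
  have d : s((1 : Fin 8), 3) ∈ tour1 ∧ (1 : Fin 8) ≠ 3 := by decide
  have e : s((3 : Fin 8), 7) ∈ tour1 ∧ (3 : Fin 8) ≠ 7 := by decide
  have f : s((7 : Fin 8), 2) ∈ tour1 ∧ (7 : Fin 8) ≠ 2 := by decide
  have g : s((2 : Fin 8), 5) ∈ tour1 ∧ (2 : Fin 8) ≠ 5 := by decide
  exact (((((reach_coe a).trans (reach_coe b)).trans (reach_coe c)).trans (reach_coe d)).trans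
    ((reach_coe e).trans (reach_coe f))).trans (reach_coe g)

/-- The `{X, X'}` path through `R`. -/
theorem reach_x {F : Set (Sym2 (Fin 8))} (h : s(0, 6) ∈ F) (h' : s(6, 1) ∈ F) :
    (fromEdgeSet F).Reachable 0 1 :=
  (reach_edge h (by decide)).trans (reach_edge h' (by decide))

/-- The `{Y, Y'}` path through `S`. -/
theorem reach_y {F : Set (Sym2 (Fin 8))} (h : s(2, 7) ∈ F) (h' : s(7, 3) ∈ F) :
    (fromEdgeSet F).Reachable 2 3 :=
  (reach_edge h (by decide)).trans (reach_edge h' (by decide))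

theorem sub2_tour2 : flexibleGadget.Sub2 (tour2 : Set (Sym2 (Fin 8))) := by
  refine ⟨subtour2, ⟨subtour2.2.1, subtour2.2.2, ?_⟩,
    ⟨endpoint_of tour2 0 (by decide), endpoint_of tour2 1 (by decide),
      reach_x (by simp [tour2]) (by simp [tour2])⟩,
    deg_of tour2 2 (by decide), deg_of tour2 3 (by decide)⟩
  have a : s((4 : Fin 8), 3) ∈ tour2 ∧ (4 : Fin 8) ≠ 3 := by decide
  have g : s((2 : Fin 8), 5) ∈ tour2 ∧ (2 : Fin 8) ≠ 5 := by decide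
  exact ((reach_coe a).trans (reach_y (by simp [tour2]) (by simp [tour2])).symm).trans
    (reach_coe g)

theorem sub3_tour3 : flexibleGadget.Sub3 (tour3 : Set (Sym2 (Fin 8))) := by
  refine ⟨subtour3, ⟨subtour3.2.1, subtour3.2.2, ?_⟩,
    ⟨endpoint_of tour3 2 (by decide), endpoint_of tour3 3 (by decide),
      reach_y (by simp [tour3]) (by simp [tour3])⟩,
    deg_of tour3 0 (by decide), deg_of tour3 1 (by decide)⟩
  have a : s((4 : Fin 8), 0) ∈ tour3 ∧ (4 : Fin 8) ≠ 0 := by decide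
  have g : s((1 : Fin 8), 5) ∈ tour3 ∧ (1 : Fin 8) ≠ 5 := by decide
  exact ((reach_coe a).trans (reach_x (by simp [tour3]) (by simp [tour3]))).trans
    (reach_coe g)

theorem sub4_tour4 : flexibleGadget.Sub4 (tour4 : Set (Sym2 (Fin 8))) := by
  have a : s((4 : Fin 8), 5) ∈ tour4 ∧ (4 : Fin 8) ≠ 5 := by decide
  exact ⟨subtour4, ⟨subtour4.2.1, subtour4.2.2, reach_coe a⟩,
    ⟨endpoint_of tour4 0 (by decide), endpoint_of tour4 1 (by decide),
      reach_x (by simp [tour4]) (by simp [tour4])⟩,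
    ⟨endpoint_of tour4 2 (by decide), endpoint_of tour4 3 (by decide),
      reach_y (by simp [tour4]) (by simp [tour4])⟩⟩

open Classical in
/-- Indicator of an edge in an edge set. -/
noncomputable def ind (F : Set (Sym2 (Fin 8))) (e : Sym2 (Fin 8)) : ℕ := if e ∈ F then 1 else 0

theorem ind_le (F : Set (Sym2 (Fin 8))) (e : Sym2 (Fin 8)) : ind F e ≤ 1 := by
  unfold ind; split <;> omega

theorem ind_one {F : Set (Sym2 (Fin 8))} {e : Sym2 (Fin 8)} : ind F e = 1 ↔ e ∈ F := by
  unfold ind; split <;> simp_all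

/-- The degrees of the eight vertices in a set of gadget edges. -/
theorem degs {F : Set (Sym2 (Fin 8))} (hF : F ⊆ gadgetEdges) :
    edgeDeg F 0 = ind F s(0, 6) + ind F s(0, 4) ∧
    edgeDeg F 1 = ind F s(6, 1) + ind F s(3, 1) + ind F s(1, 5) ∧
    edgeDeg F 2 = ind F s(5, 2) + ind F s(2, 7) ∧
    edgeDeg F 3 = ind F s(7, 3) + ind F s(3, 1) + ind F s(3, 4) ∧
    edgeDeg F 4 = ind F s(0, 4) + ind F s(4, 5) + ind F s(3, 4) ∧
    edgeDeg F 5 = ind F s(4, 5) + ind F s(5, 2) + ind F s(1, 5) ∧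
    edgeDeg F 6 = ind F s(0, 6) + ind F s(6, 1) ∧
    edgeDeg F 7 = ind F s(2, 7) + ind F s(7, 3) := by
  classical
  have key : ∀ v, edgeDeg F v = ∑ u ∈ Finset.univ.filter (fun u => s(v, u) ∈ gadgetEdges),
      ind F s(v, u) := by
    intro v
    rw [edgeDeg_eq_sum, Finset.sum_filter]
    refine Finset.sum_congr rfl fun u _ => ?_
    unfold ind
    by_cases h : s(v, u) ∈ F
    · have : s(v, u) ∈ gadgetEdges := by simpa using hF h
      simp [h, this]
    · simp [h]
  have e0 : (Finset.univ.filter fun u : Fin 8 => s(0, u) ∈ gadgetEdges) = {6, 4} := by decide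
  have e1 : (Finset.univ.filter fun u : Fin 8 => s(1, u) ∈ gadgetEdges) = {6, 3, 5} := by decide
  have e2 : (Finset.univ.filter fun u : Fin 8 => s(2, u) ∈ gadgetEdges) = {5, 7} := by decide
  have e3 : (Finset.univ.filter fun u : Fin 8 => s(3, u) ∈ gadgetEdges) = {7, 1, 4} := by decide
  have e4 : (Finset.univ.filter fun u : Fin 8 => s(4, u) ∈ gadgetEdges) = {0, 5, 3} := by decide
  have e5 : (Finset.univ.filter fun u : Fin 8 => s(5, u) ∈ gadgetEdges) = {4, 2, 1} := by decide
  have e6 : (Finset.univ.filter fun u : Fin 8 => s(6, u) ∈ gadgetEdges) = {0, 1} := by decide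
  have e7 : (Finset.univ.filter fun u : Fin 8 => s(7, u) ∈ gadgetEdges) = {2, 3} := by decide
  have sw : ∀ u v : Fin 8, ind F s(u, v) = ind F s(v, u) := fun u v => by rw [Sym2.eq_swap]
  have s1 := sw 1 6
  have s2 := sw 1 3
  have s3 := sw 2 5
  have s4 := sw 3 7
  have s5 := sw 4 0
  have s6 := sw 4 3
  have s7 := sw 5 4
  have s8 := sw 5 1
  have s9 := sw 6 0
  have s10 := sw 7 2
  refine ⟨?_, ?_, ?_, ?_, ?_, ?_, ?_, ?_⟩
  · rw [key, e0]; simp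
  · rw [key, e1]; simp; omega
  · rw [key, e2]; simp; omega
  · rw [key, e3]; simp; omega
  · rw [key, e4]; simp; omega
  · rw [key, e5]; simp; omega
  · rw [key, e6]; simp; omega
  · rw [key, e7]; simp; omega

theorem subtour_core {F : Set (Sym2 (Fin 8))} (h : flexibleGadget.Subtour F) :
    F ⊆ gadgetEdges ∧ ind F s(0, 6) = 1 ∧ ind F s(6, 1) = 1 ∧ ind F s(2, 7) = 1 ∧
      ind F s(7, 3) = 1 ∧ edgeDeg F 4 ≤ 1 ∧ edgeDeg F 5 ≤ 1 ∧ ∀ v, edgeDeg F v ≤ 2 := by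
  obtain ⟨⟨hsub, -, hd2, hd1⟩, h4, h5⟩ := h
  rw [flexible_edgeSet] at hsub
  obtain ⟨-, -, -, -, -, -, d6, d7⟩ := degs hsub
  have n6 : ¬ edgeDeg F 6 ≤ 1 := fun hh => by
    have := hd1 6 hh
    simp [GadgetData.terminals, flexibleGadget] at this
  have n7 : ¬ edgeDeg F 7 ≤ 1 := fun hh => by
    have := hd1 7 hh
    simp [GadgetData.terminals, flexibleGadget] at this
  have b1 := ind_le F s(0, 6)
  have b2 := ind_le F s(6, 1)
  have b3 := ind_le F s(2, 7)
  have b4 := ind_le F s(7, 3)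
  exact ⟨hsub, by omega, by omega, by omega, by omega, h4, h5, hd2⟩

/-- Edge sets of the gadget are determined by their indicators on the ten edges. -/
theorem eq_of_ind {F : Set (Sym2 (Fin 8))} {T : Finset (Sym2 (Fin 8))} (hF : F ⊆ gadgetEdges)
    (hT : T ⊆ gadgetEdges) (h : ∀ e ∈ gadgetEdges, ind F e = if e ∈ T then 1 else 0) :
    F = T := by
  ext e
  by_cases he : e ∈ gadgetEdges
  · rw [← ind_one, h e he]
    simp
  · exact ⟨fun h' => absurd (by simpa using hF h') he, fun h' => absurd (hT (by simpa using h')) he⟩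

theorem forall_edges {P : Sym2 (Fin 8) → Prop} (h1 : P s(0, 6)) (h2 : P s(6, 1))
    (h3 : P s(0, 4)) (h4 : P s(4, 5)) (h5 : P s(5, 2)) (h6 : P s(2, 7)) (h7 : P s(7, 3))
    (h8 : P s(3, 1)) (h9 : P s(3, 4)) (h10 : P s(1, 5)) : ∀ e ∈ gadgetEdges, P e := by
  intro e he
  simp only [gadgetEdges, Finset.mem_insert, Finset.mem_singleton] at he
  rcases he with h | h | h | h | h | h | h | h | h | h <;> subst h <;> assumption

theorem eq_tour1 {F : Set (Sym2 (Fin 8))} (h : flexibleGadget.Sub1 F) : F = tour1 := by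
  obtain ⟨hs, -, hX, hX', hY, hY'⟩ := h
  obtain ⟨hsub, c1, c2, c3, c4, h4, h5, h2⟩ := subtour_core hs
  obtain ⟨d0, d1, d2, d3, d4, d5, -, -⟩ := degs hsub
  change edgeDeg F 0 = 2 at hX
  change edgeDeg F 1 = 2 at hX'
  change edgeDeg F 2 = 2 at hY
  change edgeDeg F 3 = 2 at hY'
  refine eq_of_ind hsub (by decide) (forall_edges ?_ ?_ ?_ ?_ ?_ ?_ ?_ ?_ ?_ ?_) <;>
    simp [tour1] <;> omega

theorem eq_tour2 {F : Set (Sym2 (Fin 8))} (h : flexibleGadget.Sub2 F) : F = tour2 := by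
  obtain ⟨hs, -, ⟨hX, hX', -⟩, hY, hY'⟩ := h
  obtain ⟨hsub, c1, c2, c3, c4, h4, h5, h2⟩ := subtour_core hs
  obtain ⟨d0, d1, d2, d3, d4, d5, -, -⟩ := degs hsub
  change edgeDeg F 0 ≤ 1 at hX
  change edgeDeg F 1 ≤ 1 at hX'
  change edgeDeg F 2 = 2 at hY
  change edgeDeg F 3 = 2 at hY'
  refine eq_of_ind hsub (by decide) (forall_edges ?_ ?_ ?_ ?_ ?_ ?_ ?_ ?_ ?_ ?_) <;>
    simp [tour2] <;> omega

theorem eq_tour3 {F : Set (Sym2 (Fin 8))} (h : flexibleGadget.Sub3 F) : F = tour3 := by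
  obtain ⟨hs, -, ⟨hY, hY', -⟩, hX, hX'⟩ := h
  obtain ⟨hsub, c1, c2, c3, c4, h4, h5, h2⟩ := subtour_core hs
  obtain ⟨d0, d1, d2, d3, d4, d5, -, -⟩ := degs hsub
  change edgeDeg F 0 = 2 at hX
  change edgeDeg F 1 = 2 at hX'
  change edgeDeg F 2 ≤ 1 at hY
  change edgeDeg F 3 ≤ 1 at hY'
  refine eq_of_ind hsub (by decide) (forall_edges ?_ ?_ ?_ ?_ ?_ ?_ ?_ ?_ ?_ ?_) <;>
    simp [tour3] <;> omega

/-- A vertex that reaches another one has positive degree. -/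
theorem deg_pos {F : Set (Sym2 (Fin 8))} {a b : Fin 8} (hab : a ≠ b)
    (h : (fromEdgeSet F).Reachable a b) : edgeDeg F a ≠ 0 := by
  intro h0
  rw [edgeDeg, Set.ncard_eq_zero] at h0
  refine not_reachable_of_neighborSet_left_eq_empty hab ?_ h
  ext u
  have : u ∉ {u | s(a, u) ∈ F} := by rw [h0]; simp
  simp only [Set.mem_setOf_eq] at this
  simp [this]

theorem eq_tour4 {F : Set (Sym2 (Fin 8))} (h : flexibleGadget.Sub4 F) : F = tour4 := by
  obtain ⟨hs, ⟨-, -, hr⟩, ⟨hX, hX', -⟩, ⟨hY, hY', -⟩⟩ := h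
  obtain ⟨hsub, c1, c2, c3, c4, h4, h5, h2⟩ := subtour_core hs
  obtain ⟨d0, d1, d2, d3, d4, d5, -, -⟩ := degs hsub
  have hp : edgeDeg F 4 ≠ 0 := deg_pos (b := 5) (by decide) hr
  change edgeDeg F 0 ≤ 1 at hX
  change edgeDeg F 1 ≤ 1 at hX'
  change edgeDeg F 2 ≤ 1 at hY
  change edgeDeg F 3 ≤ 1 at hY'
  refine eq_of_ind hsub (by decide) (forall_edges ?_ ?_ ?_ ?_ ?_ ?_ ?_ ?_ ?_ ?_) <;>
    simp [tour4] <;> omega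

def sameEdges : Finset (Sym2 (Fin 8)) := {s(4, 5), s(1, 3)}

def diffEdges : Finset (Sym2 (Fin 8)) := {s(3, 4), s(1, 5)}

theorem sameSet_eq : flexibleGadget.sameSet = (sameEdges : Set (Sym2 (Fin 8))) := by
  simp [flexibleGadget, sameEdges]

theorem diffSet_eq : flexibleGadget.diffSet = (diffEdges : Set (Sym2 (Fin 8))) := by
  simp [flexibleGadget, diffEdges]

theorem weights (T A B : Finset (Sym2 (Fin 8))) (h : (T ∩ A).card = 1 ∧ T ∩ B = ∅) :
    ((T : Set (Sym2 (Fin 8))) ∩ A).ncard = 1 ∧ (T : Set (Sym2 (Fin 8))) ∩ B = ∅ := by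
  rw [← Finset.coe_inter, ← Finset.coe_inter, Set.ncard_coe_finset, h.2]
  exact ⟨h.1, by simp⟩

theorem ncard_sdiff_coe (T U : Finset (Sym2 (Fin 8))) :
    ((T : Set (Sym2 (Fin 8))) \ U).ncard = (T \ U).card := by
  rw [← Finset.coe_sdiff, Set.ncard_coe_finset]

/-- The flexible gadget is a (2,2)-parity gadget. -/
theorem flexibleGadget_is_two_two_parity_gadget :
    flexibleGadget.IsParityGadget ∧ flexibleGadget.SwapCounts 2 2 := by
  refine ⟨⟨?_, ?_, ?_, ?_, ⟨_, sub1_tour1, fun F h => eq_tour1 h⟩,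
    ⟨_, sub2_tour2, fun F h => eq_tour2 h⟩, ⟨_, sub3_tour3, fun F h => eq_tour3 h⟩,
    ⟨_, sub4_tour4, fun F h => eq_tour4 h⟩, ?_, ?_, ?_, ?_, ?_, ?_⟩, ?_, ?_, ?_, ?_, ?_, ?_⟩
  · simp [flexibleGadget]
  · rw [sameSet_eq, flexible_edgeSet, Finset.coe_subset]; decide
  · rw [diffSet_eq, flexible_edgeSet, Finset.coe_subset]; decide
  · rw [sameSet_eq, diffSet_eq, Finset.disjoint_coe]; decide
  · intro F h hX hX'
    obtain ⟨-, c1, c2, -⟩ := subtour_core h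
    exact ⟨hX, hX', reach_x (ind_one.1 c1) (ind_one.1 c2)⟩
  · intro F h hX hX'
    obtain ⟨-, -, -, c1, c2, -⟩ := subtour_core h
    exact ⟨hX, hX', reach_y (ind_one.1 c1) (ind_one.1 c2)⟩
  · intro F h
    rw [eq_tour1 h, sameSet_eq, diffSet_eq]
    exact weights _ _ _ (by decide)
  · intro F h
    rw [eq_tour4 h, sameSet_eq, diffSet_eq]
    exact weights _ _ _ (by decide)
  · intro F h
    rw [eq_tour2 h, sameSet_eq, diffSet_eq]
    exact weights _ _ _ (by decide)
  · intro F h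
    rw [eq_tour3 h, sameSet_eq, diffSet_eq]
    exact weights _ _ _ (by decide)
  · intro F F' h h'
    rw [eq_tour1 h, eq_tour2 h', ncard_sdiff_coe, ncard_sdiff_coe]; decide
  · intro F F' h h'
    rw [eq_tour3 h, eq_tour4 h', ncard_sdiff_coe, ncard_sdiff_coe]; decide
  · intro F F' h h'
    rw [eq_tour1 h, eq_tour3 h', ncard_sdiff_coe, ncard_sdiff_coe]; decide
  · intro F F' h h'
    rw [eq_tour2 h, eq_tour4 h', ncard_sdiff_coe, ncard_sdiff_coe]; decide
  · intro F F' h h'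
    rw [eq_tour1 h, eq_tour4 h', ncard_sdiff_coe, ncard_sdiff_coe]; decide
  · intro F F' h h'
    rw [eq_tour2 h, eq_tour3 h', ncard_sdiff_coe, ncard_sdiff_coe]; decide
end
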